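/- arXiv:2210.00048 — 3 statements merged into one kernel-verified Lean document; each statement's English description precedes it below -/
import Mathlib

section
/- Let 𝒜 = {A, B} be a set of two assets. A trading function f : ℝ₊² → ℝ satisfies Liquidity Additivity and translation invariance if and only if f is equivalent to an LMSR market maker (with some parameter b ≠ 0) or to a constant sum market maker. -/
/-!
Liquidity Additivity is the Thomsen condition, so a trading function satisfying it should be
additively separable, `u(x) + v(y)`, and translation invariance should then force `u` and `v` to be
both linear or both exponential with the same rate.

By translation invariance and continuity, `f` is strictly increasing up to the boundary of the
quadrant, and every bundle is indifferent to a unique diagonal bundle `(s, s)`. The position `s` is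
a potential `x + φ (y - x)` (`diagPot`) representing the indifference relation exactly, with `φ` and
`d - φ d` strictly increasing; it satisfies the Thomsen condition on the whole plane (`Profile`,
`IsTradingFunction2.exists_profile`).

The additive function `v` is obtained by the construction of Hölder and Debreu. Let `G x` send `y`
to the `y'` with `(x, y) ~ (0, y')`. By the Thomsen condition these maps commute
(`Profile.comm`), so the number of steps `G δ` needed to climb from `0` past `y` is additive up to an
error of one (`Profile.count_add`), and a limit of ratios of such counts as `δ → 0` is a strictly
increasing `v` whose gain from `y` to `G x y` does not depend on `y` (`Profile.exists_isAdd`). It is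
unique up to affine maps (`Profile.IsAdd.unique`).

By translation invariance, `y ↦ v (y + t)` has the same property (`Profile.IsAdd.translate`), whence
`v (y + t) = v t + (1 + k v t) v y` and `v` is linear or `v t = (e^{l t} - 1) / k`; similarly for
`u x = v (G x 0)`. Solving `v d = v s + u s` for `s = φ d - φ 0` shows that `φ d - φ 0` is `q d` or
`(1 / l) log (1 - q + q e^{l d})` for small `d ≥ 0` (`Profile.form_right`). Any base point may be
used in place of `0`, so `φ` is locally of analytic form, hence analytic, and the identity theorem
makes the form global (`Profile.isForm`). The first form is a constant sum market maker and the
second an LMSR with `b = -1 / l`.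

Conversely, both market makers are additively separable up to equivalence, which gives the Thomsen
condition by adding two equalities, and a translation only adds a constant to, or multiplies by
`e^{-t / b}`, the separable sum.
-/

/-- Both coordinates of the inventory are nonnegative. -/
def Nonneg2 (I : ℝ × ℝ) : Prop := 0 ≤ I.1 ∧ 0 ≤ I.2

/-- Both coordinates of the inventory are strictly positive. -/
def Pos2 (I : ℝ × ℝ) : Prop := 0 < I.1 ∧ 0 < I.2

/-- A trading function on two assets: strictly increasing in each coordinate
at strictly positive inventories and with closed upper and lower level sets. -/
structure IsTradingFunction2 (f : ℝ × ℝ → ℝ) : Prop where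
  strictMono_fst : ∀ I : ℝ × ℝ, Pos2 I → ∀ t : ℝ, I.1 < t → f I < f (t, I.2)
  strictMono_snd : ∀ I : ℝ × ℝ, Pos2 I → ∀ t : ℝ, I.2 < t → f I < f (I.1, t)
  closed_upper : ∀ J : ℝ × ℝ, Nonneg2 J →
    IsClosed {I : ℝ × ℝ | Nonneg2 I ∧ f J ≤ f I}
  closed_lower : ∀ J : ℝ × ℝ, Nonneg2 J →
    IsClosed {I : ℝ × ℝ | Nonneg2 I ∧ f I ≤ f J}

/-- Two trading functions are equivalent if they induce the same indifference
relation on nonnegative inventories. -/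
def EquivMM2 (f g : ℝ × ℝ → ℝ) : Prop :=
  ∀ I J : ℝ × ℝ, Nonneg2 I → Nonneg2 J → (f I = f J ↔ g I = g J)

/-- Liquidity Additivity (Thomsen condition). -/
def LiquidityAdditive (f : ℝ × ℝ → ℝ) : Prop :=
  ∀ I : ℝ × ℝ, Nonneg2 I → ∀ x y x' y' : ℝ, 0 ≤ x → 0 ≤ y → 0 ≤ x' → 0 ≤ y' →
    f (I.1 + x, I.2) = f (I.1, I.2 + y) →
    f (I.1 + x + x', I.2 + y) = f (I.1 + x, I.2 + y + y') →
    f (I.1 + x + x', I.2) = f (I.1, I.2 + y + y')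

/-- Scale invariance axiom. -/
def ScaleInvariant2 (f : ℝ × ℝ → ℝ) : Prop :=
  ∀ I J : ℝ × ℝ, Nonneg2 I → Nonneg2 J → ∀ l : ℝ, 0 < l →
    f I = f J → f (l * I.1, l * I.2) = f (l * J.1, l * J.2)

/-- Translation invariance axiom. -/
def TranslationInvariant2 (f : ℝ × ℝ → ℝ) : Prop :=
  ∀ (I J : ℝ × ℝ) (t : ℝ), Nonneg2 I → Nonneg2 J →
    Nonneg2 (I.1 + t, I.2 + t) → Nonneg2 (J.1 + t, J.2 + t) →
    f I = f J → f (I.1 + t, I.2 + t) = f (J.1 + t, J.2 + t)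

/-- One invariance axiom. -/
def OneInvariant2 (f : ℝ × ℝ → ℝ) : Prop :=
  ∀ (I : ℝ × ℝ) (t : ℝ), Nonneg2 I → Nonneg2 (I.1 + t, I.2 + t) →
    f (I.1 + t, I.2 + t) = f I + t

/-- Homogeneity in liquidity. -/
def Homogeneous2 (f : ℝ × ℝ → ℝ) : Prop :=
  ∀ I : ℝ × ℝ, Nonneg2 I → ∀ l : ℝ, 0 < l → f (l * I.1, l * I.2) = l * f I

/-- Symmetry axiom. -/
def Symmetric2 (f : ℝ × ℝ → ℝ) : Prop :=
  ∀ I : ℝ × ℝ, Nonneg2 I → f I = f (I.2, I.1)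

/-- Sufficient funds axiom. -/
def SufficientFunds2 (f : ℝ × ℝ → ℝ) : Prop :=
  ∀ I J : ℝ × ℝ, Nonneg2 I → Nonneg2 J → f I = f J → Pos2 I → Pos2 J

/-- Aversion to permanent loss: upper level sets are convex. -/
def AversionPL2 (f : ℝ × ℝ → ℝ) : Prop :=
  ∀ J : ℝ × ℝ, Nonneg2 J → Convex ℝ {I : ℝ × ℝ | Nonneg2 I ∧ f J ≤ f I}

/-- Two-asset logarithmic scoring rule market maker. -/
noncomputable def LMSR2 (b cA cB : ℝ) (I : ℝ × ℝ) : ℝ :=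
  -b * Real.log (Real.exp ((cA - I.1) / b) + Real.exp ((cB - I.2) / b))

/-- Two-asset constant sum market maker. -/
def ConstSum2 (cA cB : ℝ) (I : ℝ × ℝ) : ℝ := cA * I.1 + cB * I.2

/-! ### Potentials with unit gain along the diagonal -/

/-- The potential `x + φ (y - x)` on the plane: it is determined by its restriction `φ` to the
column `x = 0` and gains `t` when both coordinates gain `t`. -/
def diagPot (φ : ℝ → ℝ) (x y : ℝ) : ℝ := x + φ (y - x)

/-- The conditions on `φ` under which `diagPot φ` is strictly increasing in `y` (`mono`) and in `x`
(`comono`) and satisfies the Thomsen condition (`thomsen`). No sign condition on the coordinates is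
imposed, since every configuration can be moved along the diagonal into the quadrant. -/
structure Profile (φ : ℝ → ℝ) : Prop where
  mono : StrictMono φ
  comono : StrictMono (fun d => d - φ d)
  thomsen : ∀ p₀ p₁ p₂ q₀ q₁ q₂ : ℝ, p₀ ≤ p₁ → p₁ ≤ p₂ → q₀ ≤ q₁ → q₁ ≤ q₂ →
    diagPot φ p₁ q₀ = diagPot φ p₀ q₁ → diagPot φ p₂ q₁ = diagPot φ p₁ q₂ →
    diagPot φ p₂ q₀ = diagPot φ p₀ q₂

namespace Profile

variable {φ : ℝ → ℝ}

/-- Moving the origin to `(0, c)` preserves profiles, so the local analysis can be based at any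
point. -/
theorem shift (h : Profile φ) (c : ℝ) : Profile (fun d => φ (c + d)) where
  mono := fun a b hab => h.mono (by linarith)
  comono := fun a b hab => by
    have : c + a - φ (c + a) < c + b - φ (c + b) := h.comono (by linarith)
    show a - φ (c + a) < b - φ (c + b)
    linarith
  thomsen := fun p₀ p₁ p₂ q₀ q₁ q₂ h1 h2 h3 h4 h5 h6 => by
    have := h.thomsen p₀ p₁ p₂ (c + q₀) (c + q₁) (c + q₂) h1 h2 (by linarith) (by linarith)
    simp only [diagPot, add_sub_assoc] at this h5 h6 ⊢
    exact this h5 h6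

/-- Continuity is automatic: monotonicity of `φ` and of `d - φ d` makes `φ` a `1`-Lipschitz map. -/
theorem lip (h : Profile φ) {a b : ℝ} (hab : a ≤ b) : φ b - φ a ≤ b - a := by
  have : a - φ a ≤ b - φ b := h.comono.monotone hab
  linarith

theorem cont (h : Profile φ) : Continuous φ := by
  have : LipschitzWith 1 φ := by
    refine LipschitzWith.of_le_add fun x y => ?_
    rw [Real.dist_eq]
    rcases le_total x y with hxy | hxy
    · have := h.mono.monotone hxy
      have := abs_nonneg (x - y)
      linarith
    · have := h.lip hxy
      have := le_abs_self (x - y)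
      linarith
  exact this.continuous

theorem pot_zero (y : ℝ) : diagPot φ 0 y = φ y := by simp [diagPot]

theorem pot_diag (s : ℝ) : diagPot φ s s = s + φ 0 := by simp [diagPot]

theorem pot_add (x y t : ℝ) : diagPot φ (x + t) (y + t) = diagPot φ x y + t := by
  simp only [diagPot, add_sub_add_right_eq_sub]
  ring

theorem pot_lt_left (h : Profile φ) {x x' : ℝ} (hx : x < x') (y : ℝ) :
    diagPot φ x y < diagPot φ x' y := by
  have := h.comono (show y - x' < y - x by linarith)
  simp only [diagPot] at this ⊢
  linarith

theorem pot_le_left (h : Profile φ) {x x' : ℝ} (hx : x ≤ x') (y : ℝ) :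
    diagPot φ x y ≤ diagPot φ x' y :=
  (show StrictMono fun x => diagPot φ x y from fun _ _ hab => h.pot_lt_left hab y).monotone hx

theorem pot_strictMono_right (h : Profile φ) (x : ℝ) : StrictMono (diagPot φ x) :=
  fun a b hab => by
    have := h.mono (show a - x < b - x by linarith)
    simp only [diagPot]
    linarith

theorem pot_le_right (h : Profile φ) (x : ℝ) {y y' : ℝ} (hy : y ≤ y') :
    diagPot φ x y ≤ diagPot φ x y' := (h.pot_strictMono_right x).monotone hy

theorem pot_le_add (h : Profile φ) {x : ℝ} (hx : 0 ≤ x) (y : ℝ) : diagPot φ x y ≤ φ y + x := by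
  have := h.mono.monotone (show y - x ≤ y by linarith)
  simp only [diagPot]
  linarith

theorem le_pot (h : Profile φ) {x : ℝ} (hx : 0 ≤ x) (y : ℝ) : φ y ≤ diagPot φ x y := by
  have := h.pot_le_left hx y
  rwa [pot_zero] at this

theorem pot_cont (h : Profile φ) : Continuous fun z : ℝ × ℝ => diagPot φ z.1 z.2 := by
  have := h.cont
  unfold diagPot
  fun_prop

/-- The map sending `y` to the `y'` with `(x, y) ~ (0, y')` is defined as long as the value
`diagPot φ x y` is attained on the column `0`. -/
theorem exists_right (h : Profile φ) {x y b : ℝ} (hx : 0 ≤ x) (hb : diagPot φ x y ≤ φ b) :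
    ∃ y', y ≤ y' ∧ y' ≤ b ∧ diagPot φ x y = φ y' := by
  have h1 := h.le_pot hx y
  have hyb : y ≤ b := h.mono.le_iff_le.1 (h1.trans hb)
  obtain ⟨z, hz, hz'⟩ := intermediate_value_Icc hyb h.cont.continuousOn ⟨h1, hb⟩
  exact ⟨z, hz.1, hz.2, hz'.symm⟩

/-- Some column `δ' ∈ [0, δ]` carries `y` exactly to `y'`, provided column `δ` carries it at least
that far. -/
theorem exists_left (h : Profile φ) {δ y y' : ℝ} (hδ : 0 ≤ δ) (hy : y ≤ y')
    (hb : φ y' ≤ diagPot φ δ y) : ∃ δ', 0 ≤ δ' ∧ δ' ≤ δ ∧ diagPot φ δ' y = φ y' := by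
  have hc : Continuous fun x => diagPot φ x y :=
    h.pot_cont.comp (by fun_prop : Continuous fun x : ℝ => (x, y))
  obtain ⟨z, hz, hz'⟩ := intermediate_value_Icc (f := fun x => diagPot φ x y) hδ hc.continuousOn
    ⟨by simpa [pot_zero] using h.mono.monotone hy, hb⟩
  exact ⟨z, hz.1, hz.2, hz'⟩

/-- Write `G x` for the partial map sending `y` to the `y'` with `(x, y) ~ (0, y')`. The Thomsen
condition says that `G p₁` and `G p₂` commute: if `G p₂ (G p₁ y) = y'`, then
`G p₁ (G p₂ y) = y'`. -/
theorem comm (h : Profile φ) {p₁ p₂ y y₁ y' : ℝ} (h0 : 0 ≤ p₁) (h12 : p₁ ≤ p₂)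
    (h1 : diagPot φ p₁ y = φ y₁) (h2 : diagPot φ p₂ y₁ = φ y') :
    ∃ y₂, diagPot φ p₂ y = φ y₂ ∧ diagPot φ p₁ y₂ = φ y' := by
  have hy1 : y ≤ y₁ := h.mono.le_iff_le.1 (h1 ▸ h.le_pot h0 y)
  have hy' : y₁ ≤ y' := h.mono.le_iff_le.1 (h2 ▸ h.le_pot (h0.trans h12) y₁)
  have hc : Continuous fun z => diagPot φ p₁ z :=
    h.pot_cont.comp (by fun_prop : Continuous fun z : ℝ => (p₁, z))
  obtain ⟨y₂, hm, he⟩ := intermediate_value_Icc (f := fun z => diagPot φ p₁ z) hy' hc.continuousOn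
    (show φ y' ∈ _ from ⟨h2 ▸ h.pot_le_left h12 y₁, h.le_pot h0 y'⟩)
  refine ⟨y₂, ?_, he⟩
  have := h.thomsen 0 p₁ p₂ y y₁ y₂ h0 h12 hy1 hm.1 (by rw [h1, pot_zero])
    (by simp only at he; rw [h2, he])
  rwa [pot_zero] at this

/-! ### Standard sequences -/

/-- The map `G δ`, sending `y` to the `y'` with `(δ, y) ~ (0, y')`, as a total function on heights
up to `Y`: whenever the result would exceed `Y`, the value is the overflow mark `Y + 1`. -/
noncomputable def step (φ : ℝ → ℝ) (Y δ y : ℝ) : ℝ :=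
  open Classical in
  if diagPot φ δ y ≤ φ Y then Function.invFun φ (diagPot φ δ y) else Y + 1

theorem step_eq (h : Profile φ) {Y δ y z : ℝ} (hz : diagPot φ δ y = φ z) (hY : z ≤ Y) :
    step φ Y δ y = z := by
  rw [step, if_pos (hz ▸ h.mono.monotone hY), hz]
  exact Function.leftInverse_invFun h.mono.injective z

theorem step_over {Y δ y : ℝ} (hz : φ Y < diagPot φ δ y) : step φ Y δ y = Y + 1 := by
  rw [step, if_neg (not_le.2 hz)]

/-- Either the step stays below `Y` and solves the indifference equation, or it overflows. -/
theorem step_cases (h : Profile φ) (Y : ℝ) {δ : ℝ} (hδ : 0 ≤ δ) (y : ℝ) :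
    (y ≤ step φ Y δ y ∧ step φ Y δ y ≤ Y ∧ diagPot φ δ y = φ (step φ Y δ y)) ∨
      (φ Y < diagPot φ δ y ∧ step φ Y δ y = Y + 1) := by
  rcases le_or_gt (diagPot φ δ y) (φ Y) with hle | hlt
  · obtain ⟨z, h1, h2, h3⟩ := h.exists_right hδ hle
    left
    rw [h.step_eq h3 h2]
    exact ⟨h1, h2, h3⟩
  · exact Or.inr ⟨hlt, step_over hlt⟩

theorem step_mono (h : Profile φ) (Y : ℝ) {δ : ℝ} (hδ : 0 ≤ δ) : Monotone (step φ Y δ) := by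
  intro a b hab
  have hle := h.pot_le_right δ hab
  rcases h.step_cases Y hδ a with ⟨_, h2, h3⟩ | ⟨h1, h2⟩ <;>
  rcases h.step_cases Y hδ b with ⟨_, h5, h6⟩ | ⟨h4, h5⟩
  · rw [h3, h6] at hle
    exact h.mono.le_iff_le.1 hle
  · linarith
  · rw [h6] at hle
    exact absurd (h1.trans_le hle) (not_lt.2 (h.mono.monotone (by linarith)))
  · rw [h2, h5]

/-- The standard sequence `0, G δ 0, G δ (G δ 0), …`. It is meaningful as long as its values are at
most `Y`. -/
noncomputable def chain (φ : ℝ → ℝ) (Y δ : ℝ) (n : ℕ) : ℝ := (step φ Y δ)^[n] 0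

theorem chain_zero (Y δ : ℝ) : chain φ Y δ 0 = 0 := rfl

theorem chain_succ (Y δ : ℝ) (n : ℕ) :
    chain φ Y δ (n + 1) = step φ Y δ (chain φ Y δ n) := by
  simp only [chain, Function.iterate_succ_apply']

theorem chain_mono (h : Profile φ) {Y δ : ℝ} (hY : 0 < Y) (hδ : 0 ≤ δ) :
    Monotone (chain φ Y δ) := by
  have h0 : (0 : ℝ) ≤ step φ Y δ 0 := by
    rcases h.step_cases Y hδ 0 with ⟨h1, _⟩ | ⟨_, h1⟩ <;> linarith
  exact (h.step_mono Y hδ).monotone_iterate_of_le_map h0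

theorem chain_nonneg (h : Profile φ) {Y δ : ℝ} (hY : 0 < Y) (hδ : 0 ≤ δ) (n : ℕ) :
    0 ≤ chain φ Y δ n := h.chain_mono hY hδ (Nat.zero_le n)

theorem chain_step (h : Profile φ) {Y δ : ℝ} (hδ : 0 ≤ δ) {n : ℕ}
    (hn : chain φ Y δ (n + 1) ≤ Y) :
    diagPot φ δ (chain φ Y δ n) = φ (chain φ Y δ (n + 1)) := by
  rw [chain_succ] at hn ⊢
  rcases h.step_cases Y hδ (chain φ Y δ n) with ⟨_, _, h3⟩ | ⟨_, h2⟩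
  · exact h3
  · linarith

/-- The Archimedean property: by compactness of `[0, Y]` each step gains a fixed amount of
potential. -/
theorem chain_escape (h : Profile φ) {Y δ : ℝ} (hY : 0 < Y) (hδ : 0 < δ) :
    ∃ n, Y < chain φ Y δ n := by
  by_contra! hcon
  have hc : Continuous fun y => diagPot φ δ y - φ y := by
    have := h.cont
    unfold diagPot
    fun_prop
  obtain ⟨m, _, hmin⟩ := isCompact_Icc.exists_isMinOn (Set.nonempty_Icc.2 hY.le) hc.continuousOn
  set ε := diagPot φ δ m - φ m with hε
  have hεp : 0 < ε := by
    have := h.pot_lt_left hδ m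
    rw [pot_zero] at this
    linarith
  have key : ∀ n : ℕ, φ 0 + n * ε ≤ φ (chain φ Y δ n) := by
    intro n
    induction n with
    | zero => simp [chain_zero]
    | succ n ih =>
      rw [← h.chain_step hδ.le (hcon (n + 1))]
      have := hmin (show chain φ Y δ n ∈ Set.Icc 0 Y from ⟨h.chain_nonneg hY hδ.le n, hcon n⟩)
      simp only [Set.mem_ofPred_eq] at this
      push_cast
      linarith
  obtain ⟨n, hn⟩ := exists_nat_gt ((φ Y - φ 0) / ε)
  rw [div_lt_iff₀ hεp] at hn
  have h1 := key n
  have h2 := h.mono.monotone (hcon n)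
  linarith

/-- The number of terms of the standard sequence of mesh `δ` that are at most `y`, for `y ≤ Y`. -/
noncomputable def count (φ : ℝ → ℝ) (Y δ y : ℝ) : ℕ := sInf {n | y < chain φ Y δ n}

theorem lt_chain_count (h : Profile φ) {Y δ y : ℝ} (hY : 0 < Y) (hδ : 0 < δ) (hy : y ≤ Y) :
    y < chain φ Y δ (count φ Y δ y) := by
  obtain ⟨n, hn⟩ := h.chain_escape hY hδ
  exact Nat.sInf_mem (s := {n | y < chain φ Y δ n}) ⟨n, hy.trans_lt hn⟩

theorem lt_count_iff (h : Profile φ) {Y δ y : ℝ} (hY : 0 < Y) (hδ : 0 < δ) (hy : y ≤ Y) (n : ℕ) :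
    n < count φ Y δ y ↔ chain φ Y δ n ≤ y := by
  constructor
  · intro hn
    by_contra! hc
    exact absurd (Nat.sInf_le (s := {n | y < chain φ Y δ n}) hc) (not_le.2 hn)
  · intro hn
    by_contra! hc
    have := h.chain_mono hY hδ.le hc
    have := h.lt_chain_count hY hδ hy
    linarith

theorem count_pos (h : Profile φ) {Y δ y : ℝ} (hY : 0 < Y) (hδ : 0 < δ) (hy0 : 0 ≤ y)
    (hy : y ≤ Y) : 0 < count φ Y δ y := by
  rw [h.lt_count_iff hY hδ hy]
  exact hy0

theorem count_mono (h : Profile φ) {Y δ y y' : ℝ} (hY : 0 < Y) (hδ : 0 < δ) (hy : y ≤ y')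
    (hy' : y' ≤ Y) : count φ Y δ y ≤ count φ Y δ y' := by
  by_contra! hc
  rw [h.lt_count_iff hY hδ (hy.trans hy')] at hc
  have := h.lt_chain_count hY hδ hy'
  linarith

theorem count_zero (h : Profile φ) {Y δ : ℝ} (hY : 0 < Y) (hδ : 0 < δ) :
    count φ Y δ 0 = 1 := by
  refine le_antisymm ?_ (h.count_pos hY hδ le_rfl hY.le)
  by_contra! hc
  rw [h.lt_count_iff hY hδ hY.le] at hc
  have h1 := h.chain_step hδ.le (n := 0) (hc.trans hY.le)
  have h2 := h.pot_lt_left hδ 0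
  have h3 := h.mono.monotone hc
  rw [chain_zero] at h1
  rw [pot_zero] at h2
  simp only [zero_add] at h1
  linarith

/-- A step of mesh `δ` gains at most `δ` of potential, so small meshes give large counts. -/
theorem lt_count_of_small (h : Profile φ) {Y δ r : ℝ} (hY : 0 < Y) (hδ : 0 < δ) (hr : r ≤ Y)
    {n : ℕ} (hn : n * δ ≤ φ r - φ 0) : n < count φ Y δ r := by
  rw [h.lt_count_iff hY hδ hr]
  have key : ∀ m : ℕ, m ≤ n → φ (chain φ Y δ m) ≤ φ 0 + m * δ := by
    intro m
    induction m with
    | zero => simp [chain_zero]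
    | succ m ih =>
      intro hm
      have h1 := ih (by omega)
      have h2 := h.pot_le_add hδ.le (chain φ Y δ m)
      have h3 : ((m + 1 : ℕ) : ℝ) * δ ≤ n * δ := by gcongr
      push_cast at h3 ⊢
      have h4 := h.mono.monotone hr
      rcases h.step_cases Y hδ.le (chain φ Y δ m) with ⟨_, _, h6⟩ | ⟨h5, _⟩
      · rw [chain_succ, ← h6]
        linarith
      · linarith
  exact h.mono.le_iff_le.1 (by have := key n le_rfl; linarith)

/-- The count is additive up to an error of one: if `(x, y) ~ (0, y')` and `(x, 0) ~ (0, z)`, the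
counts of `y` and `z` sum to that of `y'` or to one more. Since `G x` commutes with `G δ`, it
carries the standard sequence below `y` to the one issued from `z = G x 0`; comparing with the
standard sequence from `0` gives both bounds. -/
theorem count_add (h : Profile φ) {Y δ x y y' z : ℝ} (hY : 0 < Y) (hδ : 0 < δ) (hδx : δ ≤ x)
    (hy : 0 ≤ y) (hy' : y' ≤ Y) (h1 : diagPot φ x y = φ y') (h2 : diagPot φ x 0 = φ z) :
    count φ Y δ y' ≤ count φ Y δ y + count φ Y δ z ∧
      count φ Y δ y + count φ Y δ z ≤ count φ Y δ y' + 1 := by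
  have hx : 0 ≤ x := hδ.le.trans hδx
  have hyy' : y ≤ y' := h.mono.le_iff_le.1 (h1 ▸ h.le_pot hx y)
  have hz0 : 0 ≤ z := h.mono.le_iff_le.1 (h2 ▸ h.le_pot hx 0)
  have hzy' : z ≤ y' := h.mono.le_iff_le.1 (by rw [← h1, ← h2]; exact h.pot_le_right x hy)
  have hyY := hyy'.trans hy'
  have hzY := hzy'.trans hy'
  obtain ⟨i, hi⟩ : ∃ i, count φ Y δ y = i + 1 :=
    Nat.exists_eq_succ_of_ne_zero (h.count_pos hY hδ hy hyY).ne'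
  obtain ⟨j, hj⟩ : ∃ j, count φ Y δ z = j + 1 :=
    Nat.exists_eq_succ_of_ne_zero (h.count_pos hY hδ hz0 hzY).ne'
  have hsi : chain φ Y δ i ≤ y := (h.lt_count_iff hY hδ hyY i).1 (by omega)
  have hsj : chain φ Y δ j ≤ z := (h.lt_count_iff hY hδ hzY j).1 (by omega)
  have hsi' : y < chain φ Y δ (i + 1) := hi ▸ h.lt_chain_count hY hδ hyY
  have hsj' : z < chain φ Y δ (j + 1) := hj ▸ h.lt_chain_count hY hδ hzY
  set g := step φ Y δ with hg
  -- By commutation, `G x` maps the `n`-th term of the standard sequence to `G δ ^ n` of `z`.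
  have claimA : ∀ n : ℕ, chain φ Y δ n ≤ y →
      diagPot φ x (chain φ Y δ n) = φ (g^[n] z) ∧ g^[n] z ≤ y' := by
    intro n
    induction n with
    | zero => exact fun _ => ⟨h2, hzy'⟩
    | succ n ih =>
      intro hn
      have hn0 : chain φ Y δ n ≤ y := (h.chain_mono hY hδ.le (Nat.le_succ n)).trans hn
      have e1 := h.chain_step hδ.le (hn.trans hyY)
      obtain ⟨y'', _, hle, e2⟩ := h.exists_right hx
        (show diagPot φ x (chain φ Y δ (n + 1)) ≤ φ y' by
          rw [← h1]; exact h.pot_le_right x hn)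
      obtain ⟨y₂, e3, e4⟩ := h.comm hδ.le hδx e1 e2
      have e5 : y₂ = g^[n] z := h.mono.injective (e3 ▸ (ih hn0).1)
      rw [Function.iterate_succ_apply', ← e5, hg, h.step_eq e4 (hle.trans hy')]
      exact ⟨e2, hle⟩
  obtain ⟨hA, hA'⟩ := claimA i hsi
  -- One more step from `z` passes `y'`: a strictly smaller mesh `δ'` carries the `i`-th term exactly
  -- to `y`, and hence, commuting with `G x`, carries `G δ ^ i` of `z` exactly to `y'`.
  have claimC : y' < g^[i + 1] z := by
    rw [Function.iterate_succ_apply']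
    rcases h.step_cases Y hδ.le (g^[i] z) with ⟨_, _, e⟩ | ⟨_, e⟩
    · have hlt : φ y < diagPot φ δ (chain φ Y δ i) := by
        rw [chain_succ] at hsi'
        rcases h.step_cases Y hδ.le (chain φ Y δ i) with ⟨_, _, e'⟩ | ⟨e', _⟩
        · rw [e']
          exact h.mono hsi'
        · exact (h.mono.monotone hyY).trans_lt e'
      obtain ⟨δ', hδ0, hδ', e1⟩ := h.exists_left hδ.le hsi hlt.le
      have hδlt : δ' < δ := lt_of_le_of_ne hδ' (by rintro rfl; exact hlt.ne e1.symm)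
      obtain ⟨y₂, e3, e4⟩ := h.comm hδ0 (hδ'.trans hδx) e1 h1
      have e5 : y₂ = g^[i] z := h.mono.injective (e3 ▸ hA)
      rw [e5] at e4
      rw [← h.mono.lt_iff_lt, ← e4, ← e]
      exact h.pot_lt_left hδlt _
    · rw [hg, e]
      linarith
  have hiter : ∀ n m : ℕ, g^[n] (chain φ Y δ m) = chain φ Y δ (n + m) := by
    intro n m
    simp only [chain, ← hg, Function.iterate_add_apply]
  have hgm : ∀ n : ℕ, Monotone g^[n] := fun n => (h.step_mono Y hδ.le).iterate n
  rw [hi, hj]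
  constructor
  · by_contra! hc
    rw [h.lt_count_iff hY hδ hy'] at hc
    have := hgm (i + 1) hsj'.le
    rw [hiter] at this
    linarith
  · have := hgm i hsj
    rw [hiter] at this
    have := (h.lt_count_iff hY hδ hy' (i + j)).2 (this.trans hA')
    omega

/-! ### Additive functions along a column -/

/-- `V` is additive on `[0, r]`: the gain of `V` from `y` to the `y'` with `(x, y) ~ (0, y')` does
not depend on `y`, hence equals its gain from `0` to the `z` with `(x, 0) ~ (0, z)`. -/
def IsAdd (φ V : ℝ → ℝ) (r : ℝ) : Prop :=
  ∀ x y y' z : ℝ, 0 ≤ x → 0 ≤ y → y' ≤ r → diagPot φ x y = φ y' → diagPot φ x 0 = φ z →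
    V y' - V y = V z - V 0

/-- Along a standard sequence an additive function is an arithmetic progression, so its value at `y`
is determined by the count up to one step. -/
theorem IsAdd.bounds (h : Profile φ) {Y δ r y : ℝ} {V : ℝ → ℝ} (hV : IsAdd φ V r)
    (hm : MonotoneOn V (Set.Icc 0 r)) (hY : 0 < Y) (hδ : 0 < δ) (hr : r ≤ Y)
    (hδr : chain φ Y δ 1 ≤ r) (hy0 : 0 ≤ y) (hy : y ≤ r) :
    V 0 + (count φ Y δ y - 1) * (V (chain φ Y δ 1) - V 0) ≤ V y ∧
      V y ≤ V 0 + count φ Y δ y * (V (chain φ Y δ 1) - V 0) := by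
  have hz : diagPot φ δ 0 = φ (chain φ Y δ 1) := by
    have := h.chain_step hδ.le (n := 0) (hδr.trans hr)
    simpa [chain_zero] using this
  have key : ∀ n : ℕ, chain φ Y δ n ≤ r →
      V (chain φ Y δ n) = V 0 + n * (V (chain φ Y δ 1) - V 0) := by
    intro n
    induction n with
    | zero => simp [chain_zero]
    | succ n ih =>
      intro hn
      have hn0 := (h.chain_mono hY hδ.le (Nat.le_succ n)).trans hn
      have e := hV δ _ _ _ hδ.le (h.chain_nonneg hY hδ.le n) hn
        (h.chain_step hδ.le (hn.trans hr)) hz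
      rw [ih hn0] at e
      push_cast
      linarith
  have hyY := hy.trans hr
  obtain ⟨i, hi⟩ : ∃ i, count φ Y δ y = i + 1 :=
    Nat.exists_eq_succ_of_ne_zero (h.count_pos hY hδ hy0 hyY).ne'
  have hsi : chain φ Y δ i ≤ y := (h.lt_count_iff hY hδ hyY i).1 (by omega)
  have hsi' : y < chain φ Y δ (i + 1) := hi ▸ h.lt_chain_count hY hδ hyY
  have hki := key i (hsi.trans hy)
  have hi0 := h.chain_nonneg hY hδ.le i
  rw [hi]
  push_cast
  constructor
  · have := hm ⟨hi0, hsi.trans hy⟩ ⟨hy0, hy⟩ hsi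
    linarith
  · have hlt : φ y ≤ diagPot φ δ (chain φ Y δ i) := by
      rw [chain_succ] at hsi'
      rcases h.step_cases Y hδ.le (chain φ Y δ i) with ⟨_, _, e'⟩ | ⟨e', _⟩
      · rw [e']
        exact (h.mono hsi').le
      · exact ((h.mono.monotone hyY).trans_lt e').le
    obtain ⟨δ', hδ0, hδ', e1⟩ := h.exists_left hδ.le hsi hlt
    have hle : diagPot φ δ' 0 ≤ φ (chain φ Y δ 1) := hz ▸ h.pot_le_left hδ' 0
    obtain ⟨z', hz0, hz1, e2⟩ := h.exists_right hδ0 hle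
    have e3 := hV δ' _ _ _ hδ0 hi0 hy e1 e2
    have e4 := hm ⟨hz0, hz1.trans hδr⟩ ⟨hz0.trans hz1, hδr⟩ hz1
    linarith

theorem exists_chain_one (h : Profile φ) {Y δ r : ℝ} (hδ : 0 ≤ δ) (hr : r ≤ Y)
    (hle : diagPot φ δ 0 ≤ φ r) : chain φ Y δ 1 ≤ r ∧ diagPot φ δ 0 = φ (chain φ Y δ 1) := by
  obtain ⟨z, h0, h1, h2⟩ := h.exists_right hδ hle
  rw [chain_succ, chain_zero, h.step_eq h2 (h1.trans hr)]
  exact ⟨h1, h2⟩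

/-- A monotone additive function that is constant on a subinterval gains nothing along a fine
enough standard sequence, and is therefore constant. -/
theorem IsAdd.strictMonoOn (h : Profile φ) {r : ℝ} {V : ℝ → ℝ} (hV : IsAdd φ V r)
    (hm : MonotoneOn V (Set.Icc 0 r)) (hr : 0 < r) (hlt : V 0 < V r) :
    StrictMonoOn V (Set.Icc 0 r) := by
  rintro y ⟨hy0, _⟩ y' ⟨_, hy'⟩ hyy'
  have hδ : 0 < φ y' - φ y := sub_pos.2 (h.mono hyy')
  set δ := φ y' - φ y
  obtain ⟨y'', h1, h2, h3⟩ := h.exists_right hδ.le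
    (show diagPot φ δ y ≤ φ y' by have := h.pot_le_add hδ.le y; linarith)
  obtain ⟨h4, h5⟩ := h.exists_chain_one (Y := r) (r := r) hδ.le le_rfl
    ((h.pot_le_right δ hy0).trans (h3.le.trans (h.mono.monotone (h2.trans hy'))))
  have h6 := hV δ y y'' _ hδ.le hy0 (h2.trans hy') h3 h5
  have h7 := (IsAdd.bounds h hV hm hr hδ le_rfl h4 hr.le le_rfl).2
  have h8 : 0 < V (chain φ r δ 1) - V 0 := by
    by_contra! hc
    have : (count φ r δ r : ℝ) * (V (chain φ r δ 1) - V 0) ≤ 0 :=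
      mul_nonpos_of_nonneg_of_nonpos (Nat.cast_nonneg _) hc
    linarith
  have h9 := hm ⟨hy0.trans h1, h2.trans hy'⟩ ⟨hy0.trans hyy'.le, hy'⟩ h2
  linarith

/-- If `A` and `B` agree with `n` and `m` steps of length `κ` up to one step, then `A / B` is close to
`n / m`, with an error controlled by `κ`. -/
theorem ratio_bound {A B n m κ : ℝ} (hκ : 0 ≤ κ) (hn : 0 ≤ n) (hnm : n ≤ m)
    (h1 : (n - 1) * κ ≤ A) (h2 : A ≤ n * κ) (h3 : (m - 1) * κ ≤ B) (h4 : B ≤ m * κ) :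
    |A * m - n * B| ≤ κ * m := by
  have hm := hn.trans hnm
  have e1 := mul_le_mul_of_nonneg_right h1 hm
  have e2 := mul_le_mul_of_nonneg_right h2 hm
  have e3 := mul_le_mul_of_nonneg_left h3 hn
  have e4 := mul_le_mul_of_nonneg_left h4 hn
  have e5 := mul_le_mul_of_nonneg_right hnm hκ
  rw [abs_le]
  constructor <;> linarith

/-- Monotone additive functions are unique up to affine maps: their normalised values are both within
one step of the same ratio of counts, for arbitrarily fine meshes. -/
theorem IsAdd.unique (h : Profile φ) {r y : ℝ} {V W : ℝ → ℝ} (hV : IsAdd φ V r)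
    (hW : IsAdd φ W r) (hVm : MonotoneOn V (Set.Icc 0 r)) (hWm : MonotoneOn W (Set.Icc 0 r))
    (hr : 0 < r) (hy0 : 0 ≤ y) (hy : y ≤ r) :
    (V y - V 0) * (W r - W 0) = (W y - W 0) * (V r - V 0) := by
  set B₁ := V r - V 0 with hB1
  set B₂ := W r - W 0 with hB2
  have b1 : 0 ≤ B₁ := sub_nonneg.2 (hVm ⟨le_rfl, hr.le⟩ ⟨hr.le, le_rfl⟩ hr.le)
  have b2 : 0 ≤ B₂ := sub_nonneg.2 (hWm ⟨le_rfl, hr.le⟩ ⟨hr.le, le_rfl⟩ hr.le)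
  have hφ : 0 < φ r - φ 0 := sub_pos.2 (h.mono hr)
  have main : ∀ k : ℕ, |(V y - V 0) * B₂ - (W y - W 0) * B₁| * (k + 1) ≤ 2 * B₁ * B₂ := by
    intro k
    set δ := (φ r - φ 0) / (k + 1 : ℕ) with hδd
    have hkp : (0 : ℝ) < (k + 1 : ℕ) := by positivity
    have hδ : 0 < δ := div_pos hφ hkp
    have hkδ : ((k + 1 : ℕ) : ℝ) * δ = φ r - φ 0 := by rw [hδd]; field_simp
    have hδle : δ ≤ φ r - φ 0 := by
      rw [← hkδ]
      have : (1 : ℝ) ≤ (k + 1 : ℕ) := by exact_mod_cast Nat.succ_le_succ (Nat.zero_le k)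
      nlinarith
    obtain ⟨h4, _⟩ := h.exists_chain_one (Y := r) (r := r) hδ.le le_rfl
      (by have := h.pot_le_add hδ.le 0; linarith)
    have hm := h.lt_count_of_small hr hδ le_rfl hkδ.le
    obtain ⟨v1, v2⟩ := IsAdd.bounds h hV hVm hr hδ le_rfl h4 hy0 hy
    obtain ⟨v3, v4⟩ := IsAdd.bounds h hV hVm hr hδ le_rfl h4 hr.le le_rfl
    obtain ⟨w1, w2⟩ := IsAdd.bounds h hW hWm hr hδ le_rfl h4 hy0 hy
    obtain ⟨w3, w4⟩ := IsAdd.bounds h hW hWm hr hδ le_rfl h4 hr.le le_rfl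
    have hnm := h.count_mono hr hδ hy le_rfl
    have c0 := h.chain_nonneg hr hδ.le 1
    have k1 : 0 ≤ V (chain φ r δ 1) - V 0 :=
      sub_nonneg.2 (hVm ⟨le_rfl, hr.le⟩ ⟨c0, h4⟩ c0)
    have k2 : 0 ≤ W (chain φ r δ 1) - W 0 :=
      sub_nonneg.2 (hWm ⟨le_rfl, hr.le⟩ ⟨c0, h4⟩ c0)
    have hn1 : (1 : ℝ) ≤ count φ r δ y := by exact_mod_cast h.count_pos hr hδ hy0 hy
    have hm' : (k + 1 : ℝ) + 1 ≤ count φ r δ r := by exact_mod_cast hm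
    have hnm' : (count φ r δ y : ℝ) ≤ count φ r δ r := by exact_mod_cast hnm
    generalize V (chain φ r δ 1) - V 0 = κ₁ at *
    generalize W (chain φ r δ 1) - W 0 = κ₂ at *
    generalize (count φ r δ y : ℝ) = n at *
    generalize (count φ r δ r : ℝ) = m at *
    have hk0 : (0 : ℝ) ≤ k := Nat.cast_nonneg k
    have mp : 0 < m := by linarith
    have v5 : (m - 1) * κ₁ ≤ B₁ := by linarith
    have w5 : (m - 1) * κ₂ ≤ B₂ := by linarith
    have a1 : |(V y - V 0) * m - n * B₁| ≤ κ₁ * m :=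
      ratio_bound k1 (by linarith) hnm' (by linarith) (by linarith) v5 (by linarith)
    have a2 : |(W y - W 0) * m - n * B₂| ≤ κ₂ * m :=
      ratio_bound k2 (by linarith) hnm' (by linarith) (by linarith) w5 (by linarith)
    have a3 : |(V y - V 0) * B₂ - (W y - W 0) * B₁| * m ≤ (κ₁ * B₂ + κ₂ * B₁) * m := by
      rw [← abs_of_pos mp, ← abs_mul, abs_of_pos mp]
      have e : ((V y - V 0) * B₂ - (W y - W 0) * B₁) * m
          = ((V y - V 0) * m - n * B₁) * B₂ - ((W y - W 0) * m - n * B₂) * B₁ := by ring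
      rw [e]
      refine (abs_sub _ _).trans ?_
      rw [abs_mul, abs_mul, abs_of_nonneg b1, abs_of_nonneg b2]
      have f1 := mul_le_mul_of_nonneg_right a1 b2
      have f2 := mul_le_mul_of_nonneg_right a2 b1
      linarith
    have a4 := le_of_mul_le_mul_right a3 mp
    have e1 : κ₁ * (k + 1) ≤ B₁ := by
      have := mul_le_mul_of_nonneg_left (show (k + 1 : ℝ) ≤ m - 1 by linarith) k1
      linarith
    have e2 : κ₂ * (k + 1) ≤ B₂ := by
      have := mul_le_mul_of_nonneg_left (show (k + 1 : ℝ) ≤ m - 1 by linarith) k2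
      linarith
    calc _ ≤ (κ₁ * B₂ + κ₂ * B₁) * (k + 1) := by gcongr
      _ = (κ₁ * (k + 1)) * B₂ + (κ₂ * (k + 1)) * B₁ := by ring
      _ ≤ B₁ * B₂ + B₂ * B₁ := by gcongr
      _ = _ := by ring
  by_contra hne
  have hpos : 0 < |(V y - V 0) * B₂ - (W y - W 0) * B₁| := abs_pos.2 (sub_ne_zero.2 hne)
  obtain ⟨k, hk⟩ := exists_nat_gt (2 * B₁ * B₂ / |(V y - V 0) * B₂ - (W y - W 0) * B₁|)
  rw [div_lt_iff₀ hpos] at hk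
  have := main k
  nlinarith

open Filter Topology in
/-- Hölder's construction: the ratios `count y / count Y` converge along an ultrafilter as the mesh
tends to zero, and the unit error in `count_add` disappears in the limit. -/
theorem exists_isAdd (h : Profile φ) {Y : ℝ} (hY : 0 < Y) :
    ∃ v : ℝ → ℝ, IsAdd φ v Y ∧ StrictMonoOn v (Set.Icc 0 Y) ∧ v 0 = 0 := by
  have hφ : 0 < φ Y - φ 0 := sub_pos.2 (h.mono hY)
  set δ : ℕ → ℝ := fun k => (φ Y - φ 0) / (k + 1 : ℕ) with hδd
  have hδ : ∀ k, 0 < δ k := fun k => div_pos hφ (by positivity)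
  have hδ0 : Tendsto δ atTop (𝓝 0) := by
    have := tendsto_const_div_atTop_nhds_zero_nat (φ Y - φ 0)
    exact (tendsto_add_atTop_iff_nat 1).2 this
  have hM : ∀ k : ℕ, (k : ℝ) ≤ count φ Y (δ k) Y := by
    intro k
    have hkδ : ((k + 1 : ℕ) : ℝ) * δ k = φ Y - φ 0 := by
      rw [hδd]; field_simp
    have := h.lt_count_of_small hY (hδ k) le_rfl hkδ.le
    exact_mod_cast (by omega : k ≤ count φ Y (δ k) Y)
  have hMinv : Tendsto (fun k => 1 / (count φ Y (δ k) Y : ℝ)) atTop (𝓝 0) := by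
    simp only [one_div]
    exact tendsto_inv_atTop_zero.comp (tendsto_atTop_mono hM tendsto_natCast_atTop_atTop)
  have hMpos : ∀ k, (0 : ℝ) < count φ Y (δ k) Y := fun k => by
    exact_mod_cast h.count_pos hY (hδ k) hY.le le_rfl
  set U : Ultrafilter ℕ := Ultrafilter.of atTop
  have hU : (U : Filter ℕ) ≤ atTop := Ultrafilter.of_le _
  set R : ℝ → ℕ → ℝ := fun y k => (count φ Y (δ k) y : ℝ) / count φ Y (δ k) Y with hR
  have hlim : ∀ y : ℝ, ∃ L, y ≤ Y → Tendsto (R y) U (𝓝 L) := by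
    intro y
    by_cases hy : y ≤ Y
    · have hmem : ∀ k, R y k ∈ Set.Icc (0 : ℝ) 1 := fun k => by
        refine ⟨by positivity, (div_le_one (hMpos k)).2 ?_⟩
        exact_mod_cast h.count_mono hY (hδ k) hy le_rfl
      obtain ⟨L, _, hL⟩ := isCompact_Icc.ultrafilter_le_nhds (U.map (R y))
        (by
          rw [le_principal_iff]
          exact Filter.mem_map.2 (Filter.univ_mem' hmem))
      exact ⟨L, fun _ => hL⟩
    · exact ⟨0, fun hc => absurd hc hy⟩
  choose v hv using hlim
  have hmono : MonotoneOn v (Set.Icc 0 Y) := by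
    intro a ha b hb hab
    refine le_of_tendsto_of_tendsto' (hv a ha.2) (hv b hb.2) fun k => ?_
    have : (count φ Y (δ k) a : ℝ) ≤ count φ Y (δ k) b := by
      exact_mod_cast h.count_mono hY (hδ k) hab hb.2
    simp only [hR]
    gcongr
  have hv0 : v 0 = 0 := by
    refine tendsto_nhds_unique (hv 0 hY.le) ?_
    have : R 0 = fun k => 1 / (count φ Y (δ k) Y : ℝ) := by
      funext k
      simp only [hR, h.count_zero hY (hδ k), Nat.cast_one]
    rw [this]
    exact hMinv.mono_left hU
  have hv1 : v Y = 1 := by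
    refine tendsto_nhds_unique (hv Y le_rfl) ?_
    have : R Y = fun _ => 1 := by
      funext k
      exact div_self (hMpos k).ne'
    rw [this]
    exact tendsto_const_nhds
  have hadd : IsAdd φ v Y := by
    intro x y y' z hx hy hy' h1 h2
    rcases hx.eq_or_lt with rfl | hx
    · rw [pot_zero] at h1 h2
      rw [h.mono.injective h1, h.mono.injective h2, sub_self, sub_self]
    rw [hv0, sub_zero]
    have hyy' : y ≤ y' := h.mono.le_iff_le.1 (h1 ▸ h.le_pot hx.le y)
    have hzy' : z ≤ y' := h.mono.le_iff_le.1 (by rw [← h1, ← h2]; exact h.pot_le_right x hy)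
    have t1 : Tendsto (fun k => R y' k - R y k - R z k) U (𝓝 (v y' - v y - v z)) :=
      ((hv y' hy').sub (hv y (hyy'.trans hy'))).sub (hv z (hzy'.trans hy'))
    have t2 : Tendsto (fun k => R y' k - R y k - R z k) U (𝓝 0) := by
      have hev : ∀ᶠ k in (U : Filter ℕ), δ k ≤ x :=
        hU ((hδ0.eventually (gt_mem_nhds hx)).mono fun k hk => le_of_lt hk)
      refine squeeze_zero_norm' ?_ (hMinv.mono_left hU)
      filter_upwards [hev] with k hk
      obtain ⟨c1, c2⟩ := h.count_add hY (hδ k) hk hy hy' h1 h2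
      have c1' : (count φ Y (δ k) y' : ℝ) ≤ count φ Y (δ k) y + count φ Y (δ k) z := by
        exact_mod_cast c1
      have c2' : (count φ Y (δ k) y : ℝ) + count φ Y (δ k) z ≤ count φ Y (δ k) y' + 1 := by
        exact_mod_cast c2
      simp only [hR, ← sub_div, Real.norm_eq_abs]
      rw [abs_div, abs_of_pos (hMpos k)]
      gcongr
      rw [abs_le]
      constructor <;> linarith
    have := tendsto_nhds_unique t1 t2
    linarith
  refine ⟨v, hadd, IsAdd.strictMonoOn h hadd hmono hY ?_, hv0⟩
  rw [hv0, hv1]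
  exact one_pos

/-! ### Functional equations and the local form of the profile -/

/-- Cauchy's equation on a bounded interval, for monotone functions. -/
theorem linear_of_additive {a : ℝ → ℝ} {R : ℝ} (hR : 0 < R) (hm : MonotoneOn a (Set.Icc 0 R))
    (ha : ∀ s t, 0 ≤ s → 0 ≤ t → s + t ≤ R → a (s + t) = a s + a t) :
    ∀ t, 0 ≤ t → t ≤ R → a t = a R / R * t := by
  have a0 : a 0 = 0 := by
    have := ha 0 0 le_rfl le_rfl (by linarith)
    rw [add_zero] at this
    linarith
  have hnat : ∀ (j : ℕ) (s : ℝ), 0 ≤ s → j * s ≤ R → a (j * s) = j * a s := by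
    intro j s hs
    induction j with
    | zero => simp [a0]
    | succ j ih =>
      intro hj
      push_cast at hj ⊢
      rw [add_mul, one_mul] at hj ⊢
      rw [ha _ _ (by positivity) hs hj, ih (by linarith)]
      ring
  -- Compare `t` with the largest multiple of `R / (n + 1)` below it.
  have low : ∀ (n : ℕ) (t : ℝ), 0 ≤ t → t ≤ R →
      a R / R * t - a R / (n + 1 : ℕ) ≤ a t := by
    intro n t ht0 ht
    have hn : (0 : ℝ) < (n + 1 : ℕ) := by positivity
    have hs : 0 ≤ R / (n + 1 : ℕ) := by positivity
    have e1 : a R = (n + 1 : ℕ) * a (R / (n + 1 : ℕ)) := by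
      rw [← hnat _ _ hs (by rw [mul_div_cancel₀ _ hn.ne']), mul_div_cancel₀ _ hn.ne']
    have aR : 0 ≤ a R := by
      have := hm ⟨le_rfl, hR.le⟩ ⟨hR.le, le_rfl⟩ hR.le
      rwa [a0] at this
    set j := ⌊t * (n + 1 : ℕ) / R⌋₊ with hj
    have hj1 : (j : ℝ) ≤ t * (n + 1 : ℕ) / R := Nat.floor_le (by positivity)
    have hj2 : t * (n + 1 : ℕ) / R < j + 1 := Nat.lt_floor_add_one _
    have hjt : j * (R / (n + 1 : ℕ)) ≤ t := by
      rw [le_div_iff₀ hR] at hj1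
      rw [← mul_div_assoc, div_le_iff₀ hn]
      exact hj1
    have e2 := hnat j _ hs (hjt.trans ht)
    have e3 := hm ⟨by positivity, hjt.trans ht⟩ ⟨ht0, ht⟩ hjt
    have e4 : a (R / (n + 1 : ℕ)) = a R / (n + 1 : ℕ) := by
      rw [eq_div_iff hn.ne', mul_comm]
      exact e1.symm
    have e5 : 0 ≤ a R / (n + 1 : ℕ) := by positivity
    have e6 : a R / R * t = (t * (n + 1 : ℕ) / R) * (a R / (n + 1 : ℕ)) := by field_simp
    rw [e6]
    rw [e2, e4] at e3
    have := mul_le_mul_of_nonneg_right hj2.le e5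
    linarith
  have hlim : Filter.Tendsto (fun n : ℕ => a R / (n + 1 : ℕ)) Filter.atTop (nhds 0) :=
    (Filter.tendsto_add_atTop_iff_nat 1).2 (tendsto_const_div_atTop_nhds_zero_nat (a R))
  have low' : ∀ t : ℝ, 0 ≤ t → t ≤ R → a R / R * t ≤ a t := by
    intro t ht0 ht
    have := (tendsto_const_nhds (x := a R / R * t)).sub hlim
    rw [sub_zero] at this
    exact le_of_tendsto' this fun n => low n t ht0 ht
  intro t ht0 ht
  -- The upper bound at `t` is the lower bound at `R - t`.
  refine le_antisymm ?_ (low' t ht0 ht)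
  have h1 := low' (R - t) (by linarith) (by linarith)
  have h2 := ha t (R - t) ht0 (by linarith) (by linarith)
  rw [add_sub_cancel] at h2
  have h3 : a R / R * (R - t) = a R - a R / R * t := by field_simp
  linarith

theorem exponential_of_multiplicative {v : ℝ → ℝ} {k r : ℝ} (hr : 0 < r)
    (hv : StrictMonoOn v (Set.Icc 0 r)) (hk : k ≠ 0) (hpos : ∀ t, 0 ≤ t → t ≤ r → 0 < 1 + k * v t)
    (hmul : ∀ s t, 0 ≤ s → 0 ≤ t → s + t ≤ r →
      1 + k * v (s + t) = (1 + k * v s) * (1 + k * v t)) :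
    ∃ l : ℝ, l ≠ 0 ∧ ∀ t, 0 ≤ t → t ≤ r → 1 + k * v t = Real.exp (l * t) := by
  have hadd : ∀ s t, 0 ≤ s → 0 ≤ t → s + t ≤ r →
      Real.log (1 + k * v (s + t)) = Real.log (1 + k * v s) + Real.log (1 + k * v t) := by
    intro s t hs ht hst
    rw [hmul s t hs ht hst, Real.log_mul (hpos s hs (by linarith)).ne'
      (hpos t ht (by linarith)).ne']
  have hlin : ∃ l : ℝ, ∀ t, 0 ≤ t → t ≤ r → Real.log (1 + k * v t) = l * t := by
    rcases hk.lt_or_gt with hk | hk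
    · have := linear_of_additive (a := fun t => -Real.log (1 + k * v t)) hr
        (by
          intro a ha b hb hab
          have h1 := hv.monotoneOn ha hb hab
          have := Real.log_le_log (hpos b hb.1 hb.2)
            (show 1 + k * v b ≤ 1 + k * v a by nlinarith)
          exact neg_le_neg this)
        (by
          intro s t hs ht hst
          simp only [hadd s t hs ht hst]
          ring)
      refine ⟨-(-Real.log (1 + k * v r) / r), fun t ht0 ht => ?_⟩
      have : -Real.log (1 + k * v t) = -Real.log (1 + k * v r) / r * t := this t ht0 ht
      linarith
    · refine ⟨_, linear_of_additive (a := fun t => Real.log (1 + k * v t)) hr ?_ hadd⟩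
      intro a ha b hb hab
      have h1 := hv.monotoneOn ha hb hab
      exact Real.log_le_log (hpos a ha.1 ha.2) (by nlinarith)
  obtain ⟨l, hl⟩ := hlin
  have hexp : ∀ t, 0 ≤ t → t ≤ r → 1 + k * v t = Real.exp (l * t) := fun t ht0 ht => by
    rw [← hl t ht0 ht, Real.exp_log (hpos t ht0 ht)]
  refine ⟨l, ?_, hexp⟩
  rintro rfl
  have h0 := hexp 0 le_rfl hr.le
  have h1 := hexp r hr.le le_rfl
  rw [zero_mul] at h0 h1
  have h2 := hv ⟨le_rfl, hr.le⟩ ⟨hr.le, le_rfl⟩ hr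
  have h3 : k * (v r - v 0) = 0 := by linarith
  rcases mul_eq_zero.1 h3 with h3 | h3
  · exact hk h3
  · linarith

/-- Translation invariance makes `y ↦ v (y + t)` additive as well: both its gain from `y` to `y'` and
its gain from `0` to `z` equal `v z₁ - v z₂`, where `z₁ = G (x + t) 0` and `z₂ = G t 0`. Indeed
`(x + t, y + t) ~ (t, y' + t)`, and both bundles can be compared with the column `0`. -/
theorem IsAdd.translate (h : Profile φ) {v : ℝ → ℝ} {Y r t : ℝ} (hv : IsAdd φ v Y)
    (hrY : r + φ r ≤ φ Y) (ht0 : 0 ≤ t) (ht : t ≤ r)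
    {x y y' z z₁ z₂ : ℝ} (hx : 0 ≤ x) (hy : 0 ≤ y) (hy' : y' ≤ r) (h1 : diagPot φ x y = φ y')
    (h2 : diagPot φ x 0 = φ z) (h3 : diagPot φ (x + t) 0 = φ z₁) (h4 : diagPot φ t 0 = φ z₂) :
    v (y' + t) - v (y + t) = v z₁ - v z₂ ∧ v (z + t) - v t = v z₁ - v z₂ := by
  have main : ∀ y y' : ℝ, 0 ≤ y → y' ≤ r → diagPot φ x y = φ y' →
      v (y' + t) - v (y + t) = v z₁ - v z₂ := by
    intro y y' hy hy' h1
    have e1 : diagPot φ (x + t) (y + t) = diagPot φ t (y' + t) := by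
      have := pot_add (φ := φ) 0 y' t
      rw [zero_add, pot_zero] at this
      rw [pot_add, h1, this]
    have hyy' : y ≤ y' := h.mono.le_iff_le.1 (h1 ▸ h.le_pot hx y)
    have e2 : diagPot φ t (y' + t) ≤ φ Y := by
      rw [← e1, pot_add, h1]
      have := h.mono.monotone hy'
      linarith
    obtain ⟨A, _, hA, e3⟩ := h.exists_right ht0 e2
    have f1 := hv (x + t) (y + t) A z₁ (by linarith) (by linarith) hA (e1.trans e3) h3
    have f2 := hv t (y' + t) A z₂ ht0 (by linarith) hA e3 h4
    linarith
  refine ⟨main y y' hy hy' h1, ?_⟩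
  have hzy' : z ≤ y' := h.mono.le_iff_le.1 (by rw [← h1, ← h2]; exact h.pot_le_right x hy)
  have := main 0 z le_rfl (hzy'.trans hy') h2
  rwa [zero_add] at this

/-- Local form of a profile to the right of `0`. An additive `v` and its translates are affinely
related, so `v (y + t) = v t + α t * v y`, and exchanging `y` and `t` forces `α = 1 + k * v`. Thus
`v` is linear if `k = 0` and `1 + k * v` is exponential otherwise; the same holds for
`u x = v (G x 0)`, the additive function of the other asset. Comparing `(0, d)` with the diagonal
bundle `(s, s)`, `s = φ d - φ 0`, gives `v d = v s + u s`, which determines `φ`. -/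
theorem form_right (h : Profile φ) {Y r : ℝ} (hr : 0 < r) (h2r : 2 * r ≤ Y)
    (hrY : r + φ r ≤ φ Y) :
    ∃ q, 0 < q ∧ q < 1 ∧ ((∀ d, 0 ≤ d → d ≤ r → φ d - φ 0 = q * d) ∨
      ∃ l : ℝ, l ≠ 0 ∧ ∀ d, 0 ≤ d → d ≤ r →
        φ d - φ 0 = 1 / l * Real.log (1 - q + q * Real.exp (l * d))) := by
  have hY : 0 < Y := by linarith
  obtain ⟨v, hv, hvm, hv0⟩ := h.exists_isAdd hY
  have hvr : StrictMonoOn v (Set.Icc 0 r) := hvm.mono (Set.Icc_subset_Icc_right (by linarith))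
  have hvpos : ∀ t, 0 < t → t ≤ Y → 0 < v t := fun t h0 h1 => by
    have := hvm ⟨le_rfl, hY.le⟩ ⟨h0.le, h1⟩ h0
    rwa [hv0] at this
  have hvrp := hvpos r hr (by linarith)
  have hφr := h.mono hr
  have hsol : ∀ x, 0 ≤ x → diagPot φ x 0 ≤ φ Y → ∃ z, 0 ≤ z ∧ z ≤ Y ∧ diagPot φ x 0 = φ z :=
    fun x hx hle => h.exists_right hx hle
  -- `y ↦ v (y + t)` is additive on `[0, r]`, hence an affine function of `v`.
  have haff : ∀ t y, 0 ≤ t → t ≤ r → 0 ≤ y → y ≤ r →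
      v y * (v (r + t) - v t) = (v (y + t) - v t) * v r := by
    intro t y ht0 ht hy0 hy
    have hVr : IsAdd φ v r := fun x y y' z hx hy hy' => hv x y y' z hx hy (by linarith)
    have hW : IsAdd φ (fun y => v (y + t)) r := by
      intro x y y' z hx hy hy' h1 h2
      have b2 : diagPot φ (x + t) 0 ≤ φ Y := by
        have e : diagPot φ (x + t) (0 + t) = φ z + t := by rw [pot_add, h2]
        have e1 := h.pot_le_right (x + t) (show (0 : ℝ) ≤ 0 + t by linarith)
        have e2 : diagPot φ x 0 ≤ φ y' := h1 ▸ h.pot_le_right x hy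
        have e3 := h.mono.monotone hy'
        linarith
      have b3 : diagPot φ t 0 ≤ φ Y := (h.pot_le_left (by linarith) 0).trans b2
      obtain ⟨z₁, _, _, h3⟩ := hsol _ (by linarith) b2
      obtain ⟨z₂, _, _, h4⟩ := hsol _ ht0 b3
      obtain ⟨e1, e2⟩ := IsAdd.translate h hv hrY ht0 ht hx hy hy' h1 h2 h3 h4
      simp only [zero_add]
      rw [e1, e2]
    have hWm : MonotoneOn (fun y => v (y + t)) (Set.Icc 0 r) := fun a ha b hb hab =>
      hvm.monotoneOn ⟨by linarith [ha.1], by linarith [ha.2]⟩ ⟨by linarith [hb.1], by linarith [hb.2]⟩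
        (by linarith)
    have := IsAdd.unique h hVr hW hvr.monotoneOn hWm hr hy0 hy
    simpa only [hv0, sub_zero, zero_add] using this
  set α : ℝ → ℝ := fun t => (v (r + t) - v t) / v r with hα
  have hshift : ∀ t y, 0 ≤ t → t ≤ r → 0 ≤ y → y ≤ r → v (y + t) = v t + α t * v y := by
    intro t y ht0 ht hy0 hy
    have := haff t y ht0 ht hy0 hy
    have e : α t * v y = v y * (v (r + t) - v t) / v r := by rw [hα]; ring
    rw [e, this, mul_div_cancel_right₀ _ hvrp.ne']
    ring
  have hαpos : ∀ t, 0 ≤ t → t ≤ r → 0 < α t := fun t ht0 ht =>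
    div_pos (sub_pos.2 (hvm ⟨ht0, by linarith⟩ ⟨by linarith, by linarith⟩ (by linarith))) hvrp
  set k := (α r - 1) / v r with hk
  -- The expressions of `v (t + r)` as a shift of `v r` by `t` and of `v t` by `r` agree.
  have hαk : ∀ t, 0 ≤ t → t ≤ r → α t = 1 + k * v t := by
    intro t ht0 ht
    have e1 := hshift t r ht0 ht hr.le le_rfl
    have e2 := hshift r t hr.le le_rfl ht0 ht
    rw [add_comm t r] at e2
    rw [hk]
    field_simp
    linarith
  -- `(s', s') ~ (0, r)`: the columns `x ≤ s'` satisfy `G x 0 ≤ r`; `ζ x` stands for `G x 0`.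
  set s' := φ r - φ 0 with hs'
  have hs'0 : 0 < s' := sub_pos.2 hφr
  have hs'r : s' ≤ r := by have := h.lip hr.le; linarith
  have hcol : ∀ x, ∃ z, 0 ≤ x → x ≤ s' → 0 ≤ z ∧ z ≤ r ∧ diagPot φ x 0 = φ z := by
    intro x
    by_cases hx : 0 ≤ x ∧ x ≤ s'
    · obtain ⟨z, hz⟩ := h.exists_right hx.1 (show diagPot φ x 0 ≤ φ r by
        have := h.pot_le_right x hx.1
        rw [pot_diag] at this
        linarith [hx.2])
      exact ⟨z, fun _ _ => hz⟩
    · exact ⟨0, fun h1 h2 => absurd ⟨h1, h2⟩ hx⟩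
  choose ζ hζ using hcol
  have hushift : ∀ s t, 0 ≤ s → 0 ≤ t → s + t ≤ s' →
      v (ζ (s + t)) = v (ζ t) + α t * v (ζ s) := by
    intro s t hs ht hst
    obtain ⟨a1, a2, a3⟩ := hζ s hs (by linarith)
    obtain ⟨b1, b2, b3⟩ := hζ t ht (by linarith)
    obtain ⟨c1, c2, c3⟩ := hζ (s + t) (by linarith) hst
    have e1 := (IsAdd.translate h hv hrY ht (by linarith) hs le_rfl a2 a3 a3 c3 b3).2
    have e2 := hshift t (ζ s) ht (by linarith) a1 a2
    linarith
  have humono : ∀ s t, 0 ≤ s → s < t → t ≤ s' → v (ζ s) < v (ζ t) := by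
    intro s t hs hst ht
    obtain ⟨a1, a2, a3⟩ := hζ s hs (by linarith)
    obtain ⟨b1, b2, b3⟩ := hζ t (by linarith) ht
    refine hvr ⟨a1, a2⟩ ⟨b1, b2⟩ (h.mono.lt_iff_lt.1 ?_)
    rw [← a3, ← b3]
    exact h.pot_lt_left hst 0
  have hu0 : v (ζ 0) = 0 := by
    have := (hζ 0 le_rfl hs'0.le).2.2
    rw [pot_zero] at this
    rw [← h.mono.injective this, hv0]
  have hup : 0 < v (ζ s') := hu0 ▸ humono 0 s' le_rfl hs'0 le_rfl
  have hlevel : ∀ d, 0 ≤ d → d ≤ r → 0 ≤ φ d - φ 0 ∧ φ d - φ 0 ≤ s' ∧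
      v d = v (φ d - φ 0) + v (ζ (φ d - φ 0)) := by
    intro d hd0 hd
    have h1 : 0 ≤ φ d - φ 0 := sub_nonneg.2 (h.mono.monotone hd0)
    have h2 : φ d - φ 0 ≤ s' := by have := h.mono.monotone hd; linarith
    refine ⟨h1, h2, ?_⟩
    have := hv (φ d - φ 0) (φ d - φ 0) d (ζ (φ d - φ 0)) h1 h1 (by linarith)
      (by rw [pot_diag]; ring) (hζ _ h1 h2).2.2
    rw [hv0] at this
    linarith
  -- The two cases are the constant sum and the logarithmic market makers.
  by_cases hk0 : k = 0
  · have hα1 : ∀ t, 0 ≤ t → t ≤ r → α t = 1 := fun t h0 h1 => by rw [hαk t h0 h1, hk0]; ring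
    have lv := linear_of_additive hr hvr.monotoneOn (fun s t hs ht hst => by
      rw [hshift t s ht (by linarith) hs (by linarith), hα1 t ht (by linarith)]; ring)
    have lu := linear_of_additive (a := fun s => v (ζ s)) hs'0
      (by
        intro a ha b hb hab
        rcases hab.eq_or_lt with rfl | hab
        · exact le_rfl
        · exact (humono a b ha.1 hab hb.2).le)
      (fun s t hs ht hst => by
        simp only [hushift s t hs ht hst, hα1 t ht (by linarith)]; ring)
    have m1 : 0 < v r / r := div_pos hvrp hr
    have m2 : 0 < v (ζ s') / s' := div_pos hup hs'0
    generalize v r / r = μ at *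
    generalize v (ζ s') / s' = ν at *
    refine ⟨μ / (μ + ν), by positivity, (div_lt_one (by positivity)).2 (by linarith), Or.inl ?_⟩
    intro d hd0 hd
    obtain ⟨g1, g2, g3⟩ := hlevel d hd0 hd
    rw [lv d hd0 hd, lv _ g1 (by linarith), lu _ g1 g2] at g3
    field_simp
    linarith
  · obtain ⟨l, hl, hexp⟩ := exponential_of_multiplicative hr hvr hk0
      (fun t h0 h1 => hαk t h0 h1 ▸ hαpos t h0 h1)
      (fun s t hs ht hst => by
        rw [hshift t s ht (by linarith) hs (by linarith), hαk t ht (by linarith)]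
        ring)
    -- Symmetry of the shift equation for `u` makes `u` proportional to `v`, first up to `s' / 2`.
    have hm0 : 0 < s' / 2 := by positivity
    have hvm := hvpos (s' / 2) hm0 (by linarith)
    set ρ := v (ζ (s' / 2)) / v (s' / 2) with hρ
    have hρ0 : 0 < ρ := div_pos (hu0 ▸ humono 0 (s' / 2) le_rfl hm0 (by linarith)) hvm
    have hu_half : ∀ s, 0 ≤ s → s ≤ s' / 2 → v (ζ s) = ρ * v s := by
      intro s hs0 hs
      have e1 := hushift s (s' / 2) hs0 hm0.le (by linarith)
      have e2 := hushift (s' / 2) s hm0.le hs0 (by linarith)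
      rw [add_comm (s' / 2) s, hαk s hs0 (by linarith)] at e2
      rw [hαk (s' / 2) hm0.le (by linarith)] at e1
      have e3 : k * (v (s' / 2) * v (ζ s)) = k * (v s * v (ζ (s' / 2))) := by linarith
      have e4 := mul_left_cancel₀ hk0 e3
      rw [hρ]
      field_simp
      linarith
    have hu : ∀ s, 0 ≤ s → s ≤ s' → v (ζ s) = ρ * v s := by
      intro s hs0 hs
      have e1 := hushift (s / 2) (s / 2) (by linarith) (by linarith) (by linarith)
      have e2 := hshift (s / 2) (s / 2) (by linarith) (by linarith) (by linarith) (by linarith)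
      rw [add_halves] at e1 e2
      rw [e1, e2, hu_half (s / 2) (by linarith) (by linarith)]
      ring
    refine ⟨1 / (1 + ρ), by positivity, (div_lt_one (by positivity)).2 (by linarith),
      Or.inr ⟨l, hl, ?_⟩⟩
    intro d hd0 hd
    obtain ⟨g1, g2, g3⟩ := hlevel d hd0 hd
    rw [hu _ g1 g2] at g3
    have f1 := hexp d hd0 hd
    have f2 := hexp _ g1 (by linarith)
    have f3 : 1 - 1 / (1 + ρ) + 1 / (1 + ρ) * Real.exp (l * d) = Real.exp (l * (φ d - φ 0)) := by
      rw [← f1, ← f2, g3]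
      field_simp
      ring
    rw [f3, Real.log_exp]
    field_simp

/-! ### The global form of the profile -/

/-- The profiles of the market makers in question: `K + q (d - c)` for constant sum and
`K + (1 / l) log (1 - q + q e^{l (d - c)})` for LMSR with `b = -1 / l`, where `0 < q < 1`. The
parameter `c` is redundant and keeps track of the base point. -/
def IsForm (ψ : ℝ → ℝ) : Prop :=
  ∃ q K c : ℝ, 0 < q ∧ q < 1 ∧ (ψ = (fun d => K + q * (d - c)) ∨
    ∃ l : ℝ, l ≠ 0 ∧ ψ = fun d => K + 1 / l * Real.log (1 - q + q * Real.exp (l * (d - c))))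

theorem IsForm.analytic {ψ : ℝ → ℝ} (hψ : IsForm ψ) : AnalyticOnNhd ℝ ψ Set.univ := by
  obtain ⟨q, K, c, hq0, hq1, rfl | ⟨l, _, rfl⟩⟩ := hψ
  · intro x _
    fun_prop
  · intro x _
    have : 0 < 1 - q + q * Real.exp (l * (x - c)) := by
      have := mul_pos hq0 (Real.exp_pos (l * (x - c)))
      linarith
    have h1 : AnalyticAt ℝ (fun d => 1 - q + q * Real.exp (l * (d - c))) x := by fun_prop
    have h2 := h1.log this
    fun_prop

open Topology in
/-- Near each `d₀` the profile has one of the two forms, by `form_right` based at a point `c` slightly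
to the left of `d₀`. -/
theorem form_near (h : Profile φ) (d₀ : ℝ) : ∃ ψ, IsForm ψ ∧ φ =ᶠ[𝓝 d₀] ψ := by
  have hlt := h.mono (show d₀ < d₀ + 1 by linarith)
  -- The last hypothesis of `form_right` on `[c, c + 2 r]` reads `2 r + φ (c + 2 r) ≤ φ (c + 2)`,
  -- where `φ (c + 2 r) ≤ φ d₀ + r` by the Lipschitz bound; hence the factor `3`.
  obtain ⟨r, hr0, hr⟩ : ∃ r : ℝ, 0 < r ∧ 3 * r ≤ φ (d₀ + 1) - φ d₀ :=
    ⟨(φ (d₀ + 1) - φ d₀) / 3, by linarith, by linarith⟩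
  have hr1 := h.lip (show d₀ ≤ d₀ + 1 by linarith)
  set c := d₀ - r with hc
  obtain ⟨q, hq0, hq1, hq⟩ := (h.shift c).form_right (Y := 2) (r := 2 * r) (by linarith)
    (by linarith) (by
      have e1 := h.lip (show d₀ ≤ c + 2 * r by linarith)
      have e2 := h.mono.monotone (show d₀ + 1 ≤ c + 2 by linarith)
      linarith)
  have hnear : ∀ᶠ d in 𝓝 d₀, c ≤ d ∧ d ≤ c + 2 * r :=
    Icc_mem_nhds (show c < d₀ by linarith) (by linarith)
  rcases hq with hq | ⟨l, hl, hq⟩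
  · refine ⟨_, ⟨q, φ c, c, hq0, hq1, Or.inl rfl⟩, ?_⟩
    filter_upwards [hnear] with d hd
    have := hq (d - c) (by linarith) (by linarith)
    rw [add_zero, add_sub_cancel] at this
    linarith
  · refine ⟨_, ⟨q, φ c, c, hq0, hq1, Or.inr ⟨l, hl, rfl⟩⟩, ?_⟩
    filter_upwards [hnear] with d hd
    have := hq (d - c) (by linarith) (by linarith)
    rw [add_zero, add_sub_cancel] at this
    linarith

/-- Being locally of analytic form, the profile is analytic, and the identity theorem propagates its
form near `0` to the whole line. -/
theorem isForm (h : Profile φ) : IsForm φ := by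
  have hφ : AnalyticOnNhd ℝ φ Set.univ := fun d _ => by
    obtain ⟨ψ, hψ, he⟩ := h.form_near d
    exact (hψ.analytic d trivial).congr he.symm
  obtain ⟨ψ, hψ, he⟩ := h.form_near 0
  rwa [hφ.eq_of_eventuallyEq hψ.analytic he]

end Profile

/-! ### From trading functions to profiles -/

namespace IsTradingFunction2

variable {f : ℝ × ℝ → ℝ}

/-- The intermediate value property on connected sets of bundles. The level sets are closed although
`f` itself need not be continuous. -/
theorem ivt (hf : IsTradingFunction2 f) {S : Set (ℝ × ℝ)} (hS : IsPreconnected S)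
    (hSn : ∀ I ∈ S, Nonneg2 I) {P Q J : ℝ × ℝ} (hP : P ∈ S) (hQ : Q ∈ S) (hJ : Nonneg2 J)
    (h1 : f P ≤ f J) (h2 : f J ≤ f Q) : ∃ K ∈ S, f K = f J := by
  obtain ⟨K, hK, ⟨_, hK1⟩, _, hK2⟩ := isPreconnected_closed_iff.1 hS _ _
    (hf.closed_lower J hJ) (hf.closed_upper J hJ)
    (fun I hI => (le_total (f I) (f J)).imp (⟨hSn I hI, ·⟩) (⟨hSn I hI, ·⟩))
    ⟨P, hP, hSn P hP, h1⟩ ⟨Q, hQ, hSn Q hQ, h2⟩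
  exact ⟨K, hK, le_antisymm hK1 hK2⟩

/-- The values of `f` have no jumps: otherwise the quadrant would be a disjoint union of two closed
sets. -/
theorem exists_between (hf : IsTradingFunction2 f) {P Q : ℝ × ℝ} (hP : Nonneg2 P) (hQ : Nonneg2 Q)
    (h : f P < f Q) : ∃ K, Nonneg2 K ∧ f P < f K ∧ f K < f Q := by
  by_contra! hcon
  have hS : IsPreconnected {I : ℝ × ℝ | Nonneg2 I} := by
    have : {I : ℝ × ℝ | Nonneg2 I} = Set.Ici 0 := by
      ext I
      simp [Nonneg2, Prod.le_def]
    rw [this]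
    exact (convex_Ici 0).isPreconnected
  obtain ⟨K, hK, ⟨_, hK1⟩, _, hK2⟩ := isPreconnected_closed_iff.1 hS _ _
    (hf.closed_lower P hP) (hf.closed_upper Q hQ)
    (fun I hI => (le_or_gt (f I) (f P)).imp (⟨hI, ·⟩) fun hlt => ⟨hI, hcon I hI hlt⟩)
    ⟨P, hP, hP, le_rfl⟩ ⟨Q, hQ, hQ, le_rfl⟩
  linarith

open Filter Topology in
/-- A strict inequality between all positive translates holds at the bundles themselves: a tie would
be translated to a tie, and a reversed inequality would persist for small translations. This extends
strict monotonicity to the boundary of the quadrant. -/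
theorem lt_of_translates (hf : IsTradingFunction2 f) (ht : TranslationInvariant2 f)
    {P Q : ℝ × ℝ} (hP : Nonneg2 P) (hQ : Nonneg2 Q)
    (h : ∀ t > 0, f (P.1 + t, P.2 + t) < f (Q.1 + t, Q.2 + t)) : f P < f Q := by
  have hPt : ∀ t > 0, Nonneg2 (P.1 + t, P.2 + t) := fun t ht =>
    ⟨by have := hP.1; simp only; linarith, by have := hP.2; simp only; linarith⟩
  have hQt : ∀ t > 0, Nonneg2 (Q.1 + t, Q.2 + t) := fun t ht =>
    ⟨by have := hQ.1; simp only; linarith, by have := hQ.2; simp only; linarith⟩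
  rcases lt_trichotomy (f P) (f Q) with hlt | heq | hgt
  · exact hlt
  · exact absurd (ht P Q 1 hP hQ (hPt 1 one_pos) (hQt 1 one_pos) heq) (h 1 one_pos).ne
  · exfalso
    obtain ⟨K, hK, h1, h2⟩ := hf.exists_between hQ hP hgt
    have hlim : ∀ R : ℝ × ℝ, Tendsto (fun t : ℝ => (R.1 + t, R.2 + t)) (𝓝[>] 0) (𝓝 R) := by
      intro R
      have hc : Continuous fun t : ℝ => (R.1 + t, R.2 + t) := by fun_prop
      have := hc.tendsto 0
      simp only [add_zero] at this
      exact this.mono_left nhdsWithin_le_nhds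
    have e1 := (hlim P).eventually ((hf.closed_lower K hK).isOpen_compl.mem_nhds
      (show P ∉ {I | Nonneg2 I ∧ f I ≤ f K} from fun hc => absurd hc.2 (not_le.2 h2)))
    have e2 := (hlim Q).eventually ((hf.closed_upper K hK).isOpen_compl.mem_nhds
      (show Q ∉ {I | Nonneg2 I ∧ f K ≤ f I} from fun hc => absurd hc.2 (not_le.2 h1)))
    obtain ⟨t, ⟨e1, e2⟩, e3⟩ := ((e1.and e2).and self_mem_nhdsWithin).exists
    have g1 : f K < f (P.1 + t, P.2 + t) := by
      by_contra! hc
      exact e1 ⟨hPt t e3, hc⟩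
    have g2 : f (Q.1 + t, Q.2 + t) < f K := by
      by_contra! hc
      exact e2 ⟨hQt t e3, hc⟩
    have := h t e3
    linarith

theorem lt_left (hf : IsTradingFunction2 f) (ht : TranslationInvariant2 f) {x x' y : ℝ}
    (hx : 0 ≤ x) (hy : 0 ≤ y) (h : x < x') : f (x, y) < f (x', y) :=
  hf.lt_of_translates ht ⟨hx, hy⟩ ⟨hx.trans h.le, hy⟩ fun t h0 =>
    hf.strictMono_fst (x + t, y + t) ⟨by simp only; linarith, by simp only; linarith⟩ (x' + t)
      (by simp only; linarith)

theorem lt_right (hf : IsTradingFunction2 f) (ht : TranslationInvariant2 f) {x y y' : ℝ}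
    (hx : 0 ≤ x) (hy : 0 ≤ y) (h : y < y') : f (x, y) < f (x, y') :=
  hf.lt_of_translates ht ⟨hx, hy⟩ ⟨hx, hy.trans h.le⟩ fun t h0 =>
    hf.strictMono_snd (x + t, y + t) ⟨by simp only; linarith, by simp only; linarith⟩ (y' + t)
      (by simp only; linarith)

theorem diag_strictMonoOn (hf : IsTradingFunction2 f) (ht : TranslationInvariant2 f) :
    StrictMonoOn (fun s : ℝ => f (s, s)) (Set.Ici 0) := fun _ hs _ _ h =>
  (hf.lt_left ht hs hs h).trans (hf.lt_right ht (le_trans hs h.le) hs h)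

/-- Every bundle is indifferent to a diagonal one, lying between the diagonal bundles of its least
and greatest coordinates. -/
theorem exists_diag (hf : IsTradingFunction2 f) (ht : TranslationInvariant2 f) {x y : ℝ}
    (hx : 0 ≤ x) (hy : 0 ≤ y) : ∃ s, 0 ≤ s ∧ f (s, s) = f (x, y) := by
  set m := min x y
  set M := max x y
  have hm : 0 ≤ m := le_min hx hy
  have hle1 : f (m, m) ≤ f (x, y) := by
    have h1 : f (m, m) ≤ f (x, m) := by
      rcases (min_le_left x y).eq_or_lt with e | e
      · exact (congrArg (fun z => f (z, m)) e).le
      · exact (hf.lt_left ht hm hm e).le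
    have h2 : f (x, m) ≤ f (x, y) := by
      rcases (min_le_right x y).eq_or_lt with e | e
      · exact (congrArg (fun z => f (x, z)) e).le
      · exact (hf.lt_right ht hx hm e).le
    exact h1.trans h2
  have hle2 : f (x, y) ≤ f (M, M) := by
    have h1 : f (x, y) ≤ f (M, y) := by
      rcases (le_max_left x y).eq_or_lt with e | e
      · exact (congrArg (fun z => f (z, y)) e).le
      · exact (hf.lt_left ht hx hy e).le
    have h2 : f (M, y) ≤ f (M, M) := by
      rcases (le_max_right x y).eq_or_lt with e | e
      · exact (congrArg (fun z => f (M, z)) e).le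
      · exact (hf.lt_right ht (hx.trans (le_max_left x y)) hy e).le
    exact h1.trans h2
  have hS : IsPreconnected ((fun s : ℝ => (s, s)) '' Set.Ici 0) :=
    (convex_Ici (0 : ℝ)).isPreconnected.image _ (by fun_prop)
  obtain ⟨_, ⟨s, hs, rfl⟩, he⟩ := hf.ivt hS (by rintro _ ⟨s, hs, rfl⟩; exact ⟨hs, hs⟩)
    ⟨m, hm, rfl⟩ ⟨M, hx.trans (le_max_left x y), rfl⟩ (J := (x, y)) ⟨hx, hy⟩ hle1 hle2
  exact ⟨s, hs, he⟩

/-- Translation invariance turns the position of the indifferent diagonal bundle into a potential of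
the form `x + φ (y - x)`. -/
theorem exists_potential (hf : IsTradingFunction2 f) (ht : TranslationInvariant2 f) :
    ∃ φ : ℝ → ℝ, ∀ x y : ℝ, 0 ≤ x → 0 ≤ y →
      0 ≤ diagPot φ x y ∧ f (x, y) = f (diagPot φ x y, diagPot φ x y) := by
  have : ∀ d : ℝ, ∃ s, 0 ≤ s ∧ f (s, s) = f (max 0 (-d), max 0 (-d) + d) := fun d =>
    hf.exists_diag ht (le_max_left _ _) (by have := le_max_right 0 (-d); linarith)
  -- `(max 0 (-d), max 0 (-d) + d)` is the least bundle in the quadrant with difference `d`.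
  choose σ hσ0 hσ using this
  refine ⟨fun d => σ d - max 0 (-d), fun x y hx hy => ?_⟩
  set n := max 0 (-(y - x)) with hn
  have hnx : n ≤ x := max_le hx (by linarith)
  have hn0 : 0 ≤ n := le_max_left _ _
  have hn1 : 0 ≤ n + (y - x) := by have := le_max_right 0 (-(y - x)); linarith
  have e1 : diagPot (fun d => σ d - max 0 (-d)) x y = σ (y - x) + (x - n) := by
    simp only [diagPot, ← hn]
    ring
  have hs := hσ0 (y - x)
  have := ht (n, n + (y - x)) (σ (y - x), σ (y - x)) (x - n) ⟨hn0, hn1⟩ ⟨hs, hs⟩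
    ⟨by simp only; linarith, by simp only; linarith⟩
    ⟨by simp only; linarith, by simp only; linarith⟩ (hσ (y - x)).symm
  simp only [add_sub_cancel] at this
  rw [show n + (y - x) + (x - n) = y by ring] at this
  rw [e1]
  exact ⟨by linarith, this⟩

theorem exists_profile (hf : IsTradingFunction2 f) (hl : LiquidityAdditive f)
    (ht : TranslationInvariant2 f) :
    ∃ φ : ℝ → ℝ, Profile φ ∧ ∀ x y x' y' : ℝ, 0 ≤ x → 0 ≤ y → 0 ≤ x' → 0 ≤ y' →
      (f (x, y) = f (x', y') ↔ diagPot φ x y = diagPot φ x' y') := by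
  obtain ⟨φ, hφ⟩ := hf.exists_potential ht
  have hlt : ∀ x y x' y' : ℝ, 0 ≤ x → 0 ≤ y → 0 ≤ x' → 0 ≤ y' →
      f (x, y) < f (x', y') → diagPot φ x y < diagPot φ x' y' := by
    intro x y x' y' hx hy hx' hy' h
    obtain ⟨h1, h2⟩ := hφ x y hx hy
    obtain ⟨h3, h4⟩ := hφ x' y' hx' hy'
    rw [h2, h4] at h
    exact ((hf.diag_strictMonoOn ht).lt_iff_lt h1 h3).1 h
  have heq : ∀ x y x' y' : ℝ, 0 ≤ x → 0 ≤ y → 0 ≤ x' → 0 ≤ y' →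
      (f (x, y) = f (x', y') ↔ diagPot φ x y = diagPot φ x' y') := by
    intro x y x' y' hx hy hx' hy'
    obtain ⟨h1, h2⟩ := hφ x y hx hy
    obtain ⟨h3, h4⟩ := hφ x' y' hx' hy'
    rw [h2, h4]
    exact (hf.diag_strictMonoOn ht).injOn.eq_iff h1 h3
  refine ⟨φ, ⟨fun d e hde => ?_, fun e d hed => ?_, ?_⟩, heq⟩
  · have n1 := neg_abs_le d
    have n2 := abs_nonneg d
    have := hlt |d| (|d| + d) |d| (|d| + e) n2 (by linarith) n2 (by linarith)
      (hf.lt_right ht n2 (by linarith) (by linarith))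
    simp only [diagPot, add_sub_cancel_left] at this
    linarith
  · have n1 := neg_abs_le d
    have n2 := abs_nonneg d
    have := hlt |d| (|d| + d) (|d| + d - e) (|d| + d) n2 (by linarith) (by linarith) (by linarith)
      (hf.lt_left ht n2 (by linarith) (by linarith))
    simp only [diagPot, add_sub_cancel_left, sub_sub_cancel] at this
    linarith
  · intro p₀ p₁ p₂ q₀ q₁ q₂ hp1 hp2 hq1 hq2 h1 h2
    set t := |p₀| + |q₀|
    have tp : 0 ≤ p₀ + t := by have := neg_abs_le p₀; have := abs_nonneg q₀; linarith
    have tq : 0 ≤ q₀ + t := by have := neg_abs_le q₀; have := abs_nonneg p₀; linarith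
    have tr : ∀ p q p' q' : ℝ, p₀ ≤ p → p₀ ≤ p' → q₀ ≤ q → q₀ ≤ q' →
        (f (p + t, q + t) = f (p' + t, q' + t) ↔ diagPot φ p q = diagPot φ p' q') := by
      intro p q p' q' a b c d
      rw [heq _ _ _ _ (by linarith) (by linarith) (by linarith) (by linarith), Profile.pot_add,
        Profile.pot_add, add_left_inj]
    rw [← tr _ _ _ _ (by linarith) (by linarith) (by linarith) (by linarith)] at h1 h2 ⊢
    have := hl (p₀ + t, q₀ + t) ⟨tp, tq⟩ (p₁ - p₀) (q₁ - q₀) (p₂ - p₁) (q₂ - q₁) (by linarith)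
      (by linarith) (by linarith) (by linarith)
    simp only at this
    rw [show p₀ + t + (p₁ - p₀) + (p₂ - p₁) = p₂ + t by ring,
      show p₀ + t + (p₁ - p₀) = p₁ + t by ring,
      show q₀ + t + (q₁ - q₀) + (q₂ - q₁) = q₂ + t by ring,
      show q₀ + t + (q₁ - q₀) = q₁ + t by ring] at this
    exact this h1 h2

end IsTradingFunction2

/-! ### The two market makers and the characterisation -/

theorem LMSR2_eq_iff {b : ℝ} (hb : b ≠ 0) (cA cB : ℝ) (I J : ℝ × ℝ) :
    LMSR2 b cA cB I = LMSR2 b cA cB J ↔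
      Real.exp ((cA - I.1) / b) + Real.exp ((cB - I.2) / b) =
        Real.exp ((cA - J.1) / b) + Real.exp ((cB - J.2) / b) := by
  simp only [LMSR2]
  rw [mul_right_inj' (neg_ne_zero.2 hb)]
  exact Real.log_injOn_pos.eq_iff (Set.mem_Ioi.2 (by positivity)) (Set.mem_Ioi.2 (by positivity))

/-- Additively separable preferences satisfy Liquidity Additivity: add the two indifferences. -/
theorem LiquidityAdditive.of_additive {f : ℝ × ℝ → ℝ} (u v : ℝ → ℝ)
    (h : ∀ I J, Nonneg2 I → Nonneg2 J → (f I = f J ↔ u I.1 + v I.2 = u J.1 + v J.2)) :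
    LiquidityAdditive f := by
  rintro ⟨a, c⟩ ⟨ha, hc⟩ x y x' y' hx hy hx' hy' h1 h2
  simp only at ha hc h1 h2 ⊢
  rw [h _ _ ⟨by simp only; linarith, by simp only; linarith⟩
    ⟨by simp only; linarith, by simp only; linarith⟩] at h1 h2 ⊢
  simp only at h1 h2 ⊢
  linarith

/-- Theorem 7: a two-asset trading function satisfies Liquidity Additivity and
translation invariance iff it is equivalent to an LMSR market maker or to a
constant sum market maker. -/
theorem stmt15 (f : ℝ × ℝ → ℝ) (hf : IsTradingFunction2 f) :
    (LiquidityAdditive f ∧ TranslationInvariant2 f) ↔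
      ((∃ b cA cB : ℝ, b ≠ 0 ∧ EquivMM2 f (LMSR2 b cA cB)) ∨
        (∃ cA cB : ℝ, 0 < cA ∧ 0 < cB ∧ EquivMM2 f (ConstSum2 cA cB))) := by
  constructor
  · rintro ⟨hl, ht⟩
    obtain ⟨φ, hφ, heq⟩ := hf.exists_profile hl ht
    obtain ⟨q, K, c, hq0, hq1, h | ⟨l, hl0, h⟩⟩ := hφ.isForm
    · right
      refine ⟨1 - q, q, by linarith, hq0, fun I J hI hJ => ?_⟩
      rw [heq I.1 I.2 J.1 J.2 hI.1 hI.2 hJ.1 hJ.2]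
      simp only [diagPot, h, ConstSum2]
      constructor <;> intro e <;> linarith
    · left
      have hb : -1 / l ≠ 0 := div_ne_zero (by norm_num) hl0
      refine ⟨-1 / l, -Real.log (1 - q) / l, c - Real.log q / l, hb, fun I J hI hJ => ?_⟩
      -- The constants absorb the weights: `e^{(cA - x) / b} = (1 - q) e^{l x}` and
      -- `e^{(cB - y) / b} = q e^{l (y - c)}`.
      have key : ∀ x y : ℝ, diagPot φ x y =
          K + LMSR2 (-1 / l) (-Real.log (1 - q) / l) (c - Real.log q / l) (x, y) := by
        intro x y
        have hp : 0 < 1 - q + q * Real.exp (l * (y - x - c)) := by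
          have := mul_pos hq0 (Real.exp_pos (l * (y - x - c)))
          linarith
        have e1 : Real.exp ((-Real.log (1 - q) / l - x) / (-1 / l)) = Real.exp (l * x) * (1 - q) := by
          rw [show (-Real.log (1 - q) / l - x) / (-1 / l) = l * x + Real.log (1 - q) by
            field_simp; ring, Real.exp_add, Real.exp_log (by linarith)]
        have e2 : Real.exp ((c - Real.log q / l - y) / (-1 / l)) =
            Real.exp (l * x) * (q * Real.exp (l * (y - x - c))) := by
          rw [show (c - Real.log q / l - y) / (-1 / l) = l * x + (Real.log q + l * (y - x - c)) by
            field_simp; ring, Real.exp_add, Real.exp_add, Real.exp_log hq0]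
        simp only [LMSR2]
        rw [e1, e2, ← mul_add, Real.log_mul (Real.exp_pos _).ne' hp.ne', Real.log_exp, diagPot, h]
        field_simp
        ring
      rw [heq I.1 I.2 J.1 J.2 hI.1 hI.2 hJ.1 hJ.2, key, key, add_right_inj]
  · rintro (⟨b, cA, cB, hb, h⟩ | ⟨cA, cB, _, _, h⟩)
    · have h' : ∀ I J, Nonneg2 I → Nonneg2 J → (f I = f J ↔
          Real.exp ((cA - I.1) / b) + Real.exp ((cB - I.2) / b) =
            Real.exp ((cA - J.1) / b) + Real.exp ((cB - J.2) / b)) := fun I J hI hJ =>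
        (h I J hI hJ).trans (LMSR2_eq_iff hb cA cB I J)
      refine ⟨LiquidityAdditive.of_additive (fun x => Real.exp ((cA - x) / b))
        (fun y => Real.exp ((cB - y) / b)) h', ?_⟩
      intro I J t hI hJ hIt hJt e
      rw [h' _ _ hI hJ] at e
      rw [h' _ _ hIt hJt]
      -- A translation multiplies both sides by `e^{-t / b}`.
      have hs : ∀ a z : ℝ, Real.exp ((a - (z + t)) / b) =
          Real.exp ((a - z) / b) * Real.exp (-t / b) := by
        intro a z
        rw [← Real.exp_add]
        congr 1
        ring
      simp only [hs, ← add_mul]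
      rw [e]
    · refine ⟨LiquidityAdditive.of_additive (fun x => cA * x) (fun y => cB * y) h, ?_⟩
      intro I J t hI hJ hIt hJt e
      rw [h _ _ hI hJ] at e
      rw [h _ _ hIt hJt]
      simp only [ConstSum2] at e ⊢
      linarith
end

section
/- Let 𝒜 = {A, B} be a set of two assets. A trading function f : ℝ₊² → ℝ satisfies Liquidity Additivity, translation invariance, and aversion to permanent loss if and only if f is equivalent to an LMSR market maker with parameter b > 0 or to a constant sum market maker. -/
open Set Filter Topology

/-! ### The Thomsen condition for a profile -/

/-- Liquidity Additivity for `g (x, y) = y + h (x - y)`, in the following coordinates: `d` is the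
difference of the two holdings at the base point, `ε` and `δ` are the first increments of the two
coordinates, `u` is the difference reached after both increments of the first coordinate, and `w`
the one reached after both increments of the second coordinate. -/
def ShiftThomsen (h : ℝ → ℝ) : Prop :=
  ∀ d u w ε δ : ℝ, 0 ≤ ε → 0 ≤ δ → d + ε ≤ u → w ≤ d - δ →
    h (d + ε) = δ + h (d - δ) → δ + h (u - δ) = d - w + h (w + ε) → h u = d - w + h w

theorem exists_eq_of_continuous {φ : ℝ → ℝ} (hφ : Continuous φ) {a b c : ℝ} (hab : a ≤ b)
    (ha : φ a ≤ c) (hb : c ≤ φ b) : ∃ x, a ≤ x ∧ x ≤ b ∧ φ x = c := by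
  obtain ⟨x, hx, hxc⟩ := intermediate_value_Icc hab hφ.continuousOn ⟨ha, hb⟩
  exact ⟨x, hx.1, hx.2, hxc⟩

/-- If the increment `ε` of `h` at `d` matches the increment `δ` of `k` ending at `d`, then the same
`ε` and `δ` match at `w` and `u` whenever `h u + k w = d`. Otherwise, moving `w` or `u` towards `d`
restores the premise of the Thomsen condition, whose conclusion then contradicts strict
monotonicity. -/
theorem increments_eq {h k : ℝ → ℝ} (hk : ∀ x, h x + k x = x) (hm : StrictMono h)
    (km : StrictMono k) (hcont : Continuous h) (hT : ShiftThomsen h)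
    {d u w ε δ : ℝ} (hε : 0 < ε) (hδ : 0 < δ) (hu : d + ε ≤ u) (hw : w ≤ d - δ)
    (hd : h u + k w = d) (h1 : h (d + ε) - h d = k d - k (d - δ)) :
    h (w + ε) - h w = k u - k (u - δ) := by
  have e1 : h (d + ε) = δ + h (d - δ) := by linarith [hk d, hk (d - δ)]
  suffices hs : δ + h (u - δ) = d - w + h (w + ε) by linarith [hk u, hk (u - δ), hk w]
  have key : ∀ u' w', d + ε ≤ u' → w' ≤ d - δ → δ + h (u' - δ) = d - w' + h (w' + ε) →
      h u' + k w' = d := by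
    intro u' w' hu' hw' h2
    have := hT d u' w' ε δ hε.le hδ.le hu' hw' e1 h2
    linarith [hk w']
  rcases lt_trichotomy (δ + h (u - δ)) (d - w + h (w + ε)) with hlt | heq | hgt
  · exfalso
    have hb : d - (d - δ) + h (d - δ + ε) ≤ δ + h (u - δ) := by
      have := hm.monotone (show d - δ + ε ≤ u - δ by linarith)
      linarith
    obtain ⟨w', hw1, hw2, hw3⟩ := exists_eq_of_continuous
      (φ := fun w' => -(d - w' + h (w' + ε))) (c := -(δ + h (u - δ))) (by fun_prop) hw
      (by linarith) (by linarith)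
    have h3 := key u w' hu hw2 (by linarith)
    have h4 : w < w' := lt_of_le_of_ne hw1 (by rintro rfl; linarith)
    linarith [km h4]
  · exact heq
  · exfalso
    have hb : δ + h (d + ε - δ) ≤ d - w + h (w + ε) := by
      have := km.monotone (show w + ε ≤ d + ε - δ by linarith)
      linarith [hk (w + ε), hk (d + ε - δ)]
    obtain ⟨u', hu1, hu2, hu3⟩ := exists_eq_of_continuous
      (φ := fun u' => δ + h (u' - δ)) (c := d - w + h (w + ε)) (by fun_prop) hu hb hgt.le
    have h3 := key u' w hu1 hw hu3
    have h4 : u' < u := lt_of_le_of_ne hu2 (by rintro rfl; linarith)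
    linarith [hm h4]

/-- Matched increments exist at every scale. -/
theorem exists_matched {h k : ℝ → ℝ} (hm : StrictMono h)
    (km : StrictMono k) (hcont : Continuous h) (kcont : Continuous k) (d : ℝ) {η : ℝ}
    (hη : 0 < η) : ∃ ε δ, 0 < ε ∧ ε < η ∧ 0 < δ ∧ δ < η ∧ h (d + ε) - h d = k d - k (d - δ) := by
  have a1 : 0 < h (d + η / 2) - h d := by linarith [hm (show d < d + η / 2 by linarith)]
  have a2 : 0 < k d - k (d - η / 2) := by linarith [km (show d - η / 2 < d by linarith)]
  set s := min (h (d + η / 2) - h d) (k d - k (d - η / 2)) with hs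
  have s0 : 0 < s := lt_min a1 a2
  have s1 : s ≤ h (d + η / 2) - h d := min_le_left _ _
  have s2 : s ≤ k d - k (d - η / 2) := min_le_right _ _
  obtain ⟨ε, e1, e2, e3⟩ := exists_eq_of_continuous (φ := fun x => h (d + x)) (c := h d + s)
    (by fun_prop) (show 0 ≤ η / 2 by linarith) (by simp; linarith) (by linarith)
  obtain ⟨δ, d1, d2, d3⟩ := exists_eq_of_continuous (φ := fun x => - k (d - x)) (c := s - k d)
    (by fun_prop) (show 0 ≤ η / 2 by linarith) (by simp; linarith) (by linarith)
  refine ⟨ε, δ, lt_of_le_of_ne e1 ?_, by linarith, lt_of_le_of_ne d1 ?_, by linarith, by linarith⟩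
  · rintro rfl; simp at e3; linarith
  · rintro rfl; simp at d3; linarith

/-! ### The relation between one-sided derivatives -/

theorem tendsto_right_quot {φ : ℝ → ℝ} {x m : ℝ} (h : HasDerivWithinAt φ m (Ioi x) x)
    {ε : ℕ → ℝ} (e0 : ∀ n, 0 < ε n) (e : Tendsto ε atTop (𝓝 0)) :
    Tendsto (fun n => (φ (x + ε n) - φ x) / ε n) atTop (𝓝 m) := by
  rw [hasDerivWithinAt_iff_tendsto_slope' (by simp)] at h
  have h2 : Tendsto (fun n => x + ε n) atTop (𝓝[>] x) := by
    refine tendsto_nhdsWithin_iff.2 ⟨by simpa using tendsto_const_nhds.add e, ?_⟩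
    exact Eventually.of_forall fun n => by simp [e0 n]
  refine (h.comp h2).congr fun n => ?_
  simp [slope_def_field]

theorem tendsto_left_quot {φ : ℝ → ℝ} {x m : ℝ} (h : HasDerivWithinAt φ m (Iio x) x)
    {ε : ℕ → ℝ} (e0 : ∀ n, 0 < ε n) (e : Tendsto ε atTop (𝓝 0)) :
    Tendsto (fun n => (φ x - φ (x - ε n)) / ε n) atTop (𝓝 m) := by
  rw [hasDerivWithinAt_iff_tendsto_slope' (by simp)] at h
  have h2 : Tendsto (fun n => x - ε n) atTop (𝓝[<] x) := by
    refine tendsto_nhdsWithin_iff.2 ⟨by simpa using tendsto_const_nhds.sub e, ?_⟩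
    exact Eventually.of_forall fun n => by simp [e0 n]
  refine (h.comp h2).congr fun n => ?_
  have := (e0 n).ne'
  simp only [Function.comp, slope_def_field]
  rw [← neg_div_neg_eq]
  ring_nf

/-- The infinitesimal form of the Thomsen condition: divide `increments_eq` by matched increments
tending to `0`. Here `p` is the right derivative of `h` and `q` the left derivative of `k`. -/
theorem deriv_relation {h k p q : ℝ → ℝ} (hk : ∀ x, h x + k x = x) (hm : StrictMono h)
    (km : StrictMono k) (hcont : Continuous h) (kcont : Continuous k) (hT : ShiftThomsen h)
    (hp : ∀ x, HasDerivWithinAt h (p x) (Ioi x) x) (hq : ∀ x, HasDerivWithinAt k (q x) (Iio x) x)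
    {u w : ℝ} (huw : w < u) :
    p w * q (h u + k w) = q u * p (h u + k w) := by
  set d := h u + k w with hd
  have dw : w < d := by linarith [hm huw, hk w]
  have du : d < u := by linarith [km huw, hk u]
  have hη : ∀ n : ℕ, 0 < min (min (d - w) (u - d)) (1 / ((n : ℝ) + 1)) := fun n =>
    lt_min (lt_min (by linarith) (by linarith)) (by positivity)
  choose ε δ e0 e1 d0 d1 hed using fun n => exists_matched hm km hcont kcont d (hη n)
  simp only [lt_min_iff] at e1 d1
  have et : Tendsto ε atTop (𝓝 0) := squeeze_zero (fun n => (e0 n).le) (fun n => (e1 n).2.le)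
    tendsto_one_div_add_atTop_nhds_zero_nat
  have dt : Tendsto δ atTop (𝓝 0) := squeeze_zero (fun n => (d0 n).le) (fun n => (d1 n).2.le)
    tendsto_one_div_add_atTop_nhds_zero_nat
  have hinc : ∀ n, h (w + ε n) - h w = k u - k (u - δ n) := fun n =>
    increments_eq hk hm km hcont hT (e0 n) (d0 n) (by linarith [(e1 n).1.2])
      (by linarith [(d1 n).1.1]) hd.symm (hed n)
  refine tendsto_nhds_unique
    ((tendsto_right_quot (hp w) e0 et).mul (tendsto_left_quot (hq d) d0 dt)) ?_
  refine ((tendsto_left_quot (hq u) d0 dt).mul (tendsto_right_quot (hp d) e0 et)).congr fun n => ?_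
  rw [hinc n, hed n]
  ring

/-! ### Solving the functional equation -/

/-- An antitone function which satisfies Cauchy's equation around each point is affine. It is
differentiable at some point near any `d`, and the equation carries this differentiability, with
the same derivative, to all points near `d`; so the derivative is locally constant. -/
theorem local_cauchy_affine {L : ℝ → ℝ} (hL : Antitone L)
    (hloc : ∀ d, ∃ η > 0, ∀ x y : ℝ, |x| < η → |y| < η → L (d + x + y) + L d = L (d + x) + L (d + y)) :
    ∃ a c : ℝ, 0 ≤ a ∧ ∀ x, L x = c - a * x := by
  have hae : ∀ᵐ x, DifferentiableAt ℝ L x := by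
    filter_upwards [hL.neg.ae_differentiableAt] with x hx
    simpa using hx.neg
  have hdense := MeasureTheory.Measure.dense_of_ae hae
  have hder : ∀ d, ∃ m, ∀ᶠ x in 𝓝 d, HasDerivAt L m x := by
    intro d
    obtain ⟨η, hη, hadd⟩ := hloc d
    obtain ⟨z, hzd, hz⟩ := hdense.exists_dist_lt d (show 0 < η / 3 by linarith)
    have hz' : |z - d| < η / 3 := by rw [abs_sub_comm]; simpa [Real.dist_eq] using hz
    have hdz : DifferentiableAt ℝ L z := hzd
    refine ⟨deriv L z, ?_⟩
    filter_upwards [Metric.ball_mem_nhds d (show 0 < η / 3 by linarith)] with x hx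
    have hx' : |x - d| < η / 3 := by simpa [Real.dist_eq] using hx
    have h1 : HasDerivAt (fun t => L (t + (z - x))) (deriv L z) x := by
      refine HasDerivAt.comp_add_const x (z - x) ?_
      simpa using hdz.hasDerivAt
    have h2 : HasDerivAt (fun t => L (t + (z - x)) + (L (d + (x - z)) - L d)) (deriv L z) x :=
      h1.add_const _
    refine h2.congr_of_eventuallyEq ?_
    filter_upwards [Metric.ball_mem_nhds x (show 0 < η / 3 by linarith)] with t ht
    have ht' : |t - x| < η / 3 := by simpa [Real.dist_eq] using ht
    rw [abs_lt] at *
    have := hadd (t + (z - x) - d) (x - z) (by rw [abs_lt]; constructor <;> linarith)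
      (by rw [abs_lt]; constructor <;> linarith)
    rw [show d + (t + (z - x) - d) + (x - z) = t by ring,
      show d + (t + (z - x) - d) = t + (z - x) by ring] at this
    linarith
  have hdiff : ∀ x, HasDerivAt L (deriv L x) x := fun x => by
    obtain ⟨m, hm⟩ := hder x
    exact hm.self_of_nhds.differentiableAt.hasDerivAt
  have hlc : IsLocallyConstant (deriv L) := by
    rw [IsLocallyConstant.iff_eventually_eq]
    intro d
    obtain ⟨m, hm⟩ := hder d
    filter_upwards [hm] with x hx
    rw [hx.deriv, hm.self_of_nhds.deriv]
  set a := - deriv L 0 with ha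
  have hconst : ∀ x, L x + a * x = L 0 + a * 0 := fun x => by
    have hd : ∀ x, HasDerivAt (fun x => L x + a * x) 0 x := fun x => by
      have h1 := (hdiff x).add ((hasDerivAt_id x).const_mul a)
      have h2 : deriv L x = deriv L 0 := hlc.apply_eq_of_preconnectedSpace x 0
      have h3 : deriv L x + a * 1 = 0 := by rw [h2, ha]; ring
      rw [h3] at h1
      exact h1
    exact is_const_of_deriv_eq_zero (fun x => (hd x).differentiableAt) (fun x => (hd x).deriv) x 0
  refine ⟨a, L 0, ?_, fun x => by linarith [hconst x]⟩
  have := hL (show (0 : ℝ) ≤ 1 by norm_num)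
  linarith [hconst 1]

/-- A profile satisfying the Thomsen condition is differentiable with logistic derivative. -/
theorem exists_hasDerivAt {h : ℝ → ℝ} (hm : StrictMono h) (km : StrictMono fun x => x - h x)
    (hconc : ConcaveOn ℝ univ h) (hT : ShiftThomsen h) :
    ∃ a c : ℝ, 0 ≤ a ∧
      ∀ x, HasDerivAt h (Real.exp (c - a * x) / (1 + Real.exp (c - a * x))) x := by
  obtain ⟨k, hkdef⟩ : ∃ k : ℝ → ℝ, k = fun x => x - h x := ⟨_, rfl⟩
  rw [← hkdef] at km
  have hk : ∀ x, h x + k x = x := fun x => by simp [hkdef]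
  have hcont : Continuous h := hconc.locallyLipschitz.continuous
  have kcont : Continuous k := by rw [hkdef]; fun_prop
  have kconv : ConvexOn ℝ univ k := by
    rw [hkdef]; exact (convexOn_id convex_univ).sub hconc
  obtain ⟨r, hr⟩ : ∃ r : ℝ → ℝ, r = fun x => derivWithin k (Ioi x) x := ⟨_, rfl⟩
  obtain ⟨q, hqd⟩ : ∃ q : ℝ → ℝ, q = fun x => derivWithin k (Iio x) x := ⟨_, rfl⟩
  have hrd : ∀ x, HasDerivWithinAt k (r x) (Ioi x) x := fun x => by
    rw [hr]; exact kconv.hasDerivWithinAt_rightDeriv_of_mem_interior (by simp)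
  have hq : ∀ x, HasDerivWithinAt k (q x) (Iio x) x := fun x => by
    rw [hqd]; exact kconv.hasDerivWithinAt_leftDeriv_of_mem_interior (by simp)
  have hp : ∀ x, HasDerivWithinAt h (1 - r x) (Ioi x) x := fun x => by
    have : h = fun x => x - k x := by funext x; linarith [hk x]
    rw [this]; exact (hasDerivWithinAt_id x _).sub (hrd x)
  have qr : ∀ x, q x ≤ r x := fun x => by
    rw [hr, hqd]; exact kconv.leftDeriv_le_rightDeriv_of_mem_interior (by simp)
  have rs : ∀ x y, x < y → r x ≤ slope k x y := fun x y hxy =>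
    kconv.le_slope_of_hasDerivWithinAt_Ioi (mem_univ _) (mem_univ _) hxy (hrd x)
  have sq : ∀ x y, x < y → slope k x y ≤ q y := fun x y hxy =>
    kconv.slope_le_of_hasDerivWithinAt_Iio (mem_univ _) (mem_univ _) hxy (hq y)
  have rq : ∀ x y, x < y → r x ≤ q y := fun x y hxy => (rs x y hxy).trans (sq x y hxy)
  have r1 : ∀ x, r x < 1 := fun x => by
    refine (rs x (x + 1) (by linarith)).trans_lt ?_
    rw [slope_def_field]
    have := hm (show x < x + 1 by linarith)
    simp only [add_sub_cancel_left, div_one]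
    linarith [hk x, hk (x + 1)]
  have q0 : ∀ x, 0 < q x := fun x => by
    refine lt_of_lt_of_le ?_ (sq (x - 1) x (by linarith))
    rw [slope_def_field]
    have := km (show x - 1 < x by linarith)
    simp only [sub_sub_cancel, div_one]
    linarith
  have rmono : ∀ x y, x ≤ y → r x ≤ r y := fun x y hxy => by
    rcases hxy.eq_or_lt with rfl | hlt
    · exact le_rfl
    · exact (rq x y hlt).trans (qr y)
  have qmono : ∀ x y, x ≤ y → q x ≤ q y := fun x y hxy => by
    rcases hxy.eq_or_lt with rfl | hlt
    · exact le_rfl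
    · exact (qr x).trans (rq x y hlt)
  -- `log R`, where `R = h'₊ / k'₋`
  have hL : Antitone fun x => Real.log (1 - r x) - Real.log (q x) := fun x y hxy => by
    have h1 := Real.log_le_log (by linarith [r1 y]) (show 1 - r y ≤ 1 - r x by
      linarith [rmono x y hxy])
    have h2 := Real.log_le_log (q0 x) (qmono x y hxy)
    linarith
  have hPex : ∀ u w, w < u →
      Real.log (1 - r (h u + k w)) - Real.log (q (h u + k w)) =
        Real.log (1 - r w) - Real.log (q u) := by
    intro u w huw
    have := deriv_relation (p := fun x => 1 - r x) hk hm km hcont kcont hT hp hq huw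
    have h1 : ∀ x, 1 - r x ≠ 0 := fun x => by linarith [r1 x]
    have h2 : ∀ x, q x ≠ 0 := fun x => (q0 x).ne'
    have h3 := congrArg Real.log this
    rw [Real.log_mul (h1 _) (h2 _), Real.log_mul (h2 _) (h1 _)] at h3
    linarith
  obtain ⟨a, c, ha, hLa⟩ := local_cauchy_affine hL (by
    intro d
    -- the base point `d = h (d + ε) + k (d - δ)` leaves room to vary `u` and `w` while `w < d < u`
    obtain ⟨ε, δ, e0, -, d0, -, hed⟩ := exists_matched hm km hcont kcont d one_pos
    have i1 := hm (show d < d + ε by linarith)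
    have i2 := hm (show d + ε < d + ε + 1 by linarith)
    have i3 := km (show d - δ < d by linarith)
    have i4 := km (show d - δ - 1 < d - δ by linarith)
    refine ⟨min (min (h (d + ε) - h d) (h (d + ε + 1) - h (d + ε)))
      (min (k d - k (d - δ)) (k (d - δ) - k (d - δ - 1))),
      lt_min (lt_min (by linarith) (by linarith)) (lt_min (by linarith) (by linarith)), ?_⟩
    intro x y hx hy
    simp only [lt_min_iff, abs_lt] at hx hy
    obtain ⟨u, u1, -, u3⟩ := exists_eq_of_continuous (c := h (d + ε) + x) hcont
      (show d ≤ d + ε + 1 by linarith) (by linarith) (by linarith)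
    obtain ⟨w, w1, w2, w3⟩ := exists_eq_of_continuous (c := k (d - δ) + y) kcont
      (show d - δ - 1 ≤ d by linarith) (by linarith) (by linarith)
    have hud : d < u := lt_of_le_of_ne u1 (by rintro rfl; linarith)
    have hwd : w < d := lt_of_le_of_ne w2 (by rintro rfl; linarith)
    have j1 := hPex u w (by linarith)
    have j2 := hPex u (d - δ) (by linarith)
    have j3 := hPex (d + ε) w (by linarith)
    have j4 := hPex (d + ε) (d - δ) (by linarith)
    have hd := hk d
    rw [show h u + k w = d + x + y by linarith] at j1
    rw [show h u + k (d - δ) = d + x by linarith] at j2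
    rw [show h (d + ε) + k w = d + y by linarith] at j3
    rw [show h (d + ε) + k (d - δ) = d by linarith] at j4
    linarith)
  refine ⟨a, c, ha, ?_⟩
  have hR : ∀ x, 1 - r x = q x * Real.exp (c - a * x) := fun x => by
    rw [← hLa x, Real.exp_sub, Real.exp_log (by linarith [r1 x]), Real.exp_log (q0 x)]
    have := (q0 x).ne'
    field_simp
  -- `S = 1 / (1 + R)` lies between the one-sided derivatives `q ≤ r` of `k`; as `S` is continuous
  -- and `r x ≤ q y` for `x < y`, both coincide with `S`
  obtain ⟨S, hS⟩ : ∃ S : ℝ → ℝ, S = fun x => 1 / (1 + Real.exp (c - a * x)) := ⟨_, rfl⟩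
  have hpos : ∀ x, 0 < 1 + Real.exp (c - a * x) := fun x => by positivity
  have Scont : Continuous S := by
    rw [hS]
    exact continuous_const.div (by fun_prop) fun x => (hpos x).ne'
  have qS : ∀ x, q x ≤ S x := fun x => by
    rw [hS]; simp only
    rw [le_div_iff₀ (hpos x)]; linarith [hR x, qr x]
  have Sr : ∀ x, S x ≤ r x := fun x => by
    rw [hS]; simp only
    rw [div_le_iff₀ (hpos x)]
    have := mul_le_mul_of_nonneg_right (qr x) (Real.exp_pos (c - a * x)).le
    linarith [hR x]
  have rS' : ∀ x, r x ≤ S x := fun x => by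
    refine ge_of_tendsto (Scont.continuousAt.tendsto.mono_left nhdsWithin_le_nhds :
      Tendsto S (𝓝[>] x) (𝓝 (S x))) ?_
    filter_upwards [self_mem_nhdsWithin] with y hy
    exact (rq x y hy).trans (qS y)
  have Sq' : ∀ x, S x ≤ q x := fun x => by
    refine le_of_tendsto (Scont.continuousAt.tendsto.mono_left nhdsWithin_le_nhds :
      Tendsto S (𝓝[<] x) (𝓝 (S x))) ?_
    filter_upwards [self_mem_nhdsWithin] with y hy
    exact (Sr y).trans (rq y x hy)
  intro x
  have hkx : HasDerivAt k (S x) x := by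
    have h1 := hrd x
    have h2 := hq x
    rw [(rS' x).antisymm (Sr x)] at h1
    rw [(qS x).antisymm (Sq' x)] at h2
    have := (hasDerivWithinAt_Iio_iff_Iic.1 h2).union (hasDerivWithinAt_Ioi_iff_Ici.1 h1)
    rwa [Iic_union_Ici, hasDerivWithinAt_univ] at this
  have hh : h = fun x => x - k x := by funext x; linarith [hk x]
  have hv : Real.exp (c - a * x) / (1 + Real.exp (c - a * x)) = 1 - S x := by
    rw [hS]; have := (hpos x).ne'; field_simp; ring
  rw [hv, hh]
  exact (hasDerivAt_id x).sub hkx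

/-! ### The diagonal profile of a trading function -/

theorem pos_lt_of_lt {f : ℝ × ℝ → ℝ} (hf : IsTradingFunction2 f) {x y x' y' : ℝ}
    (hx : 0 < x) (hy : 0 < y) (hxx : x ≤ x') (hyy : y ≤ y') (hne : x < x' ∨ y < y') :
    f (x, y) < f (x', y') := by
  have h1 : f (x, y) ≤ f (x', y) := by
    rcases hxx.eq_or_lt with rfl | h
    · exact le_rfl
    · exact (hf.strictMono_fst (x, y) ⟨hx, hy⟩ x' h).le
  have h2 : f (x', y) ≤ f (x', y') := by
    rcases hyy.eq_or_lt with rfl | h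
    · exact le_rfl
    · exact (hf.strictMono_snd (x', y) ⟨hx.trans_le hxx, hy⟩ y' h).le
  rcases hne with h | h
  · exact (hf.strictMono_fst (x, y) ⟨hx, hy⟩ x' h).trans_le h2
  · exact h1.trans_lt (hf.strictMono_snd (x', y) ⟨hx.trans_le hxx, hy⟩ y' h)

/-- A trading function increases strictly along the diagonal direction, also from the boundary of
the quadrant, where the coordinatewise monotonicity axioms do not apply: a boundary point is a limit
of interior ones and lower level sets are closed. -/
theorem diag_lt {f : ℝ × ℝ → ℝ} (hf : IsTradingFunction2 f) {I : ℝ × ℝ} (hI : Nonneg2 I)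
    {s : ℝ} (hs : 0 < s) : f I < f (I.1 + s, I.2 + s) := by
  obtain ⟨x, y⟩ := I
  obtain ⟨hx, hy⟩ := hI
  simp only at hx hy ⊢
  have h1 : f (x + s / 2, y + s / 2) < f (x + s, y + s) :=
    pos_lt_of_lt hf (by linarith) (by linarith) (by linarith) (by linarith) (Or.inl (by linarith))
  refine lt_of_le_of_lt ?_ h1
  have hcl := hf.closed_lower (x + s / 2, y + s / 2) ⟨by simp only; linarith, by simp only; linarith⟩
  have ht : Tendsto (fun t : ℝ => (x + t, y + t)) (𝓝[>] 0) (𝓝 (x, y)) := by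
    have : Continuous fun t : ℝ => (x + t, y + t) := by fun_prop
    simpa using (this.tendsto 0).mono_left (nhdsWithin_le_nhds (s := Ioi 0))
  refine (hcl.mem_of_tendsto ht ?_).2
  filter_upwards [Ioo_mem_nhdsGT (show (0 : ℝ) < s / 2 by linarith)] with t ht
  obtain ⟨t0, t1⟩ := ht
  refine ⟨⟨by simp only; linarith, by simp only; linarith⟩, (pos_lt_of_lt hf ?_ ?_ ?_ ?_ (Or.inl ?_)).le⟩ <;>
    linarith

theorem diag_lt_iff {f : ℝ × ℝ → ℝ} (hf : IsTradingFunction2 f) {r s : ℝ} (hr : 0 ≤ r)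
    (hs : 0 ≤ s) : f (r, r) < f (s, s) ↔ r < s := by
  have key : ∀ a b : ℝ, 0 ≤ a → a < b → f (a, a) < f (b, b) := fun a b ha hab => by
    simpa using diag_lt hf (I := (a, a)) ⟨ha, ha⟩ (sub_pos.2 hab)
  refine ⟨fun h => ?_, key r s hr⟩
  by_contra hc
  rcases (not_lt.1 hc).eq_or_lt with rfl | h'
  · exact lt_irrefl _ h
  · exact lt_asymm h (key s r hs h')

/-- A point of the diagonal indifferent to `(x, y)`: the two closed level sets cover the segment
joining the diagonal points at `min x y` and `max x y`, which is connected. -/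
theorem exists_diag {f : ℝ × ℝ → ℝ} (hf : IsTradingFunction2 f) {x y : ℝ} (hx : 0 < x)
    (hy : 0 < y) : ∃ r, min x y ≤ r ∧ r ≤ max x y ∧ f (x, y) = f (r, r) := by
  have hc : Continuous fun r : ℝ => (r, r) := by fun_prop
  have h1 := (hf.closed_lower (x, y) ⟨hx.le, hy.le⟩).preimage hc
  have h2 := (hf.closed_upper (x, y) ⟨hx.le, hy.le⟩).preimage hc
  have hm : 0 < min x y := lt_min hx hy
  have hmM : min x y ≤ max x y := min_le_max
  obtain ⟨r, hr, ha, hb⟩ := isPreconnected_closed_iff.1 (isPreconnected_Icc (a := min x y)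
    (b := max x y)) _ _ h1 h2 (fun r hr => by
      have : 0 ≤ r := hm.le.trans hr.1
      rcases le_total (f (r, r)) (f (x, y)) with h | h
      · exact Or.inl ⟨⟨this, this⟩, h⟩
      · exact Or.inr ⟨⟨this, this⟩, h⟩)
    ⟨min x y, ⟨le_rfl, hmM⟩, ⟨hm.le, hm.le⟩, by
      rcases (min_le_left x y).eq_or_lt with h | h
      · rcases (min_le_right x y).eq_or_lt with h' | h'
        · rw [h'] at h ⊢; rw [h]
        · exact (pos_lt_of_lt hf hm hm (min_le_left _ _) (min_le_right _ _) (Or.inr h')).le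
      · exact (pos_lt_of_lt hf hm hm (min_le_left _ _) (min_le_right _ _) (Or.inl h)).le⟩
    ⟨max x y, ⟨hmM, le_rfl⟩, ⟨hm.le.trans hmM, hm.le.trans hmM⟩, by
      rcases (le_max_left x y).eq_or_lt with h | h
      · rcases (le_max_right x y).eq_or_lt with h' | h'
        · rw [← h'] at h ⊢; rw [h]
        · exact (pos_lt_of_lt hf hx hy (le_max_left _ _) (le_max_right _ _) (Or.inr h')).le
      · exact (pos_lt_of_lt hf hx hy (le_max_left _ _) (le_max_right _ _) (Or.inl h)).le⟩
  exact ⟨r, hr.1, hr.2, le_antisymm hb.2 ha.2⟩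

/-- `h` is a diagonal profile of `f`: the inventory `(x, y)` is indifferent to the diagonal
inventory whose two coordinates are `y + h (x - y)`. The profile depends on `x - y` only, which
is how translation invariance is encoded. -/
def IsProfile (f : ℝ × ℝ → ℝ) (h : ℝ → ℝ) : Prop :=
  ∀ x y, 0 ≤ x → 0 ≤ y →
    0 ≤ y + h (x - y) ∧ f (x, y) = f (y + h (x - y), y + h (x - y))

theorem exists_profile {f : ℝ × ℝ → ℝ} (hf : IsTradingFunction2 f)
    (hTI : TranslationInvariant2 f) :
    ∃ h : ℝ → ℝ, IsProfile f h := by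
  have key : ∀ d : ℝ, ∃ c, ∀ y, 0 ≤ y → 0 ≤ d + y →
      0 ≤ y + c ∧ f (d + y, y) = f (y + c, y + c) := by
    intro d
    obtain ⟨T, hT0, hTd⟩ : ∃ T : ℝ, 0 < T ∧ 0 < d + T :=
      ⟨|d| + 1, by positivity, by linarith [neg_abs_le d]⟩
    -- solve at an interior translate, then translate back, possibly to the boundary
    obtain ⟨r, hr, -, hfr⟩ := exists_diag hf hTd hT0
    have hr0 : 0 < r := (lt_min hTd hT0).trans_le hr
    refine ⟨r - T, fun y hy hdy => ?_⟩
    have hc : 0 ≤ y + (r - T) := by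
      rcases min_le_iff.1 hr with h | h <;> linarith
    refine ⟨hc, ?_⟩
    have := hTI (d + T, T) (r, r) (y - T) ⟨hTd.le, hT0.le⟩ ⟨hr0.le, hr0.le⟩
      ⟨by simp only; linarith, by simp only; linarith⟩
      ⟨by simp only; linarith, by simp only; linarith⟩ hfr
    convert this using 2 <;> ext <;> simp <;> ring
  choose h hh using key
  refine ⟨h, fun x y hx hy => ?_⟩
  have := hh (x - y) y hy (by linarith)
  rwa [sub_add_cancel] at this

theorem exists_shift (d w : ℝ) : ∃ T : ℝ, 0 < T ∧ 0 < d + T ∧ 0 < w + T :=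
  ⟨|d| + |w| + 1, by positivity, by linarith [neg_abs_le d, abs_nonneg w],
    by linarith [neg_abs_le w, abs_nonneg d]⟩

section Profile

variable {f : ℝ × ℝ → ℝ} {h : ℝ → ℝ}

theorem profile_lt_iff (hf : IsTradingFunction2 f)
    (hh : IsProfile f h)
    {x y x' y' : ℝ} (hx : 0 ≤ x) (hy : 0 ≤ y) (hx' : 0 ≤ x') (hy' : 0 ≤ y') :
    f (x, y) < f (x', y') ↔ y + h (x - y) < y' + h (x' - y') := by
  rw [(hh x y hx hy).2, (hh x' y' hx' hy').2]
  exact diag_lt_iff hf (hh x y hx hy).1 (hh x' y' hx' hy').1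

theorem profile_eq_iff (hf : IsTradingFunction2 f)
    (hh : IsProfile f h)
    {x y x' y' : ℝ} (hx : 0 ≤ x) (hy : 0 ≤ y) (hx' : 0 ≤ x') (hy' : 0 ≤ y') :
    f (x, y) = f (x', y') ↔ y + h (x - y) = y' + h (x' - y') := by
  have h1 := profile_lt_iff hf hh hx hy hx' hy'
  have h2 := profile_lt_iff hf hh hx' hy' hx hy
  constructor
  · intro he
    exact le_antisymm (not_lt.1 fun hc => (h2.2 hc).ne' he) (not_lt.1 fun hc => (h1.2 hc).ne he)
  · intro he
    exact le_antisymm (not_lt.1 fun hc => (h2.1 hc).ne' he) (not_lt.1 fun hc => (h1.1 hc).ne he)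

theorem profile_strictMono (hf : IsTradingFunction2 f)
    (hh : IsProfile f h) : StrictMono h := by
  intro d d' hd
  obtain ⟨T, hT, h1, -⟩ := exists_shift d 0
  have := (profile_lt_iff hf hh (x := d + T) (y := T) (x' := d' + T) (y' := T)
    (by linarith) (by linarith) (by linarith) (by linarith)).1
    (pos_lt_of_lt hf h1 hT (by linarith) le_rfl (Or.inl (by linarith)))
  simpa using this

theorem profile_strictMono' (hf : IsTradingFunction2 f)
    (hh : IsProfile f h) :
    StrictMono fun x => x - h x := by
  intro d d' hd
  obtain ⟨T, hT, h1, h2⟩ := exists_shift (-d) (-d')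
  have := (profile_lt_iff hf hh (x := T) (y := -d' + T) (x' := T) (y' := -d + T)
    (by linarith) (by linarith) (by linarith) (by linarith)).1
    (pos_lt_of_lt hf hT h2 le_rfl (by linarith) (Or.inr (by linarith)))
  rw [show T - (-d' + T) = d' by ring, show T - (-d + T) = d by ring] at this
  simp only
  linarith

theorem profile_shiftThomsen (hf : IsTradingFunction2 f)
    (hh : IsProfile f h)
    (hLA : LiquidityAdditive f) : ShiftThomsen h := by
  intro d u w ε δ hε hδ hu hw e1 e2
  obtain ⟨T, hT, hd, -⟩ := exists_shift d 0
  have := hLA (d + T, T) ⟨hd.le, hT.le⟩ ε δ (u - d - ε) (d - w - δ) hε hδ (by linarith)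
    (by linarith)
  simp only at this
  rw [profile_eq_iff hf hh (by linarith) (by linarith) (by linarith) (by linarith),
    profile_eq_iff hf hh (by linarith) (by linarith) (by linarith) (by linarith),
    profile_eq_iff hf hh (by linarith) (by linarith) (by linarith) (by linarith)] at this
  ring_nf at this e1 e2 ⊢
  have := this (by linarith) (by linarith)
  linarith

theorem profile_concave (hf : IsTradingFunction2 f)
    (hh : IsProfile f h)
    (hPL : AversionPL2 f) : ConcaveOn ℝ univ h := by
  refine ⟨convex_univ, fun d _ d' _ a b ha hb hab => ?_⟩
  simp only [smul_eq_mul]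
  -- the points of differences `d`, `d'` on one level curve of `g`, moved into the quadrant by `T`
  obtain ⟨T₁, hT₁, hd₁, hc₁⟩ := exists_shift (d - h d) (-h d)
  obtain ⟨T₂, hT₂, hd₂, hc₂⟩ := exists_shift (d' - h d') (-h d')
  obtain ⟨T, hT⟩ : ∃ T, T = T₁ + T₂ := ⟨_, rfl⟩
  have hn1 : Nonneg2 (d - h d + T, -h d + T) := ⟨by simp only; linarith, by simp only; linarith⟩
  have hn2 : Nonneg2 (d' - h d' + T, -h d' + T) :=
    ⟨by simp only; linarith, by simp only; linarith⟩
  have hle : f (d - h d + T, -h d + T) ≤ f (d' - h d' + T, -h d' + T) := by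
    refine ((profile_eq_iff hf hh hn1.1 hn1.2 hn2.1 hn2.2).2 ?_).le
    simp only
    rw [show d - h d + T - (-h d + T) = d by ring, show d' - h d' + T - (-h d' + T) = d' by ring]
    ring
  have hmem := hPL (d - h d + T, -h d + T) hn1 ⟨hn1, le_rfl⟩ ⟨hn2, hle⟩ ha hb hab
  obtain ⟨hn3, hle3⟩ := hmem
  have h3 : a • (d - h d + T, -h d + T) + b • (d' - h d' + T, -h d' + T) =
      (a * (d - h d + T) + b * (d' - h d' + T), a * (-h d + T) + b * (-h d' + T)) := by
    simp
  rw [h3] at hn3 hle3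
  have h4 := mt (profile_lt_iff hf hh hn3.1 hn3.2 hn1.1 hn1.2).2 (not_lt.2 hle3)
  simp only at h4
  rw [show d - h d + T - (-h d + T) = d by ring,
    show a * (d - h d + T) + b * (d' - h d' + T) - (a * (-h d + T) + b * (-h d' + T)) =
      a * d + b * d' by ring] at h4
  have h5 : a * T + b * T = T := by rw [← add_mul, hab, one_mul]
  linarith

/-! ### The two directions -/

theorem forward (hf : IsTradingFunction2 f) (hLA : LiquidityAdditive f)
    (hTI : TranslationInvariant2 f) (hPL : AversionPL2 f) :
    (∃ b cA cB : ℝ, 0 < b ∧ EquivMM2 f (LMSR2 b cA cB)) ∨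
      (∃ cA cB : ℝ, 0 < cA ∧ 0 < cB ∧ EquivMM2 f (ConstSum2 cA cB)) := by
  obtain ⟨h, hh⟩ := exists_profile hf hTI
  obtain ⟨a, c, ha, hd⟩ := exists_hasDerivAt (profile_strictMono hf hh)
    (profile_strictMono' hf hh) (profile_concave hf hh hPL) (profile_shiftThomsen hf hh hLA)
  have key : ∀ H : ℝ → ℝ, (∀ x, HasDerivAt H (Real.exp (c - a * x) / (1 + Real.exp (c - a * x))) x) →
      ∀ x, h x = H x + (h 0 - H 0) := fun H hH x => by
    have h1 : ∀ x, HasDerivAt (fun x => h x - H x) 0 x := fun x => by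
      have := (hd x).sub (hH x)
      rwa [sub_self] at this
    have := is_const_of_deriv_eq_zero (fun x => (h1 x).differentiableAt) (fun x => (h1 x).deriv) x 0
    linarith
  rcases ha.eq_or_lt with rfl | ha
  · right
    have he := Real.exp_pos c
    have hk := key (fun x => Real.exp c / (1 + Real.exp c) * x) (fun x => by
      simpa using (hasDerivAt_id x).const_mul (Real.exp c / (1 + Real.exp c)))
    refine ⟨Real.exp c / (1 + Real.exp c), 1 / (1 + Real.exp c), by positivity, by positivity, ?_⟩
    rintro ⟨x, y⟩ ⟨x', y'⟩ ⟨hx, hy⟩ ⟨hx', hy'⟩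
    rw [profile_eq_iff hf hh hx hy hx' hy', hk (x - y), hk (x' - y')]
    have h1 : 1 / (1 + Real.exp c) = 1 - Real.exp c / (1 + Real.exp c) := by field_simp; ring
    simp only [ConstSum2, h1]
    constructor <;> intro h <;> linarith
  · left
    have hk := key (fun x => -(1 / a) * Real.log (1 + Real.exp (c - a * x))) (fun x => by
      have hp : 0 < 1 + Real.exp (c - a * x) := by positivity
      have h1 : HasDerivAt (fun x => c - a * x) (-a) x := by
        simpa using ((hasDerivAt_id x).const_mul a).const_sub c
      have h2 := ((h1.exp.const_add 1).log hp.ne').const_mul (-(1 / a))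
      refine h2.congr_deriv ?_
      have := ha.ne'
      field_simp)
    refine ⟨1 / a, c / a, 0, by positivity, ?_⟩
    have hl : ∀ x y : ℝ, LMSR2 (1 / a) (c / a) 0 (x, y) =
        y + -(1 / a) * Real.log (1 + Real.exp (c - a * (x - y))) := fun x y => by
      have hp : 0 < 1 + Real.exp (c - a * (x - y)) := by positivity
      simp only [LMSR2]
      have : Real.exp ((c / a - x) / (1 / a)) + Real.exp ((0 - y) / (1 / a)) =
          Real.exp (-(a * y)) * (1 + Real.exp (c - a * (x - y))) := by
        rw [mul_add, mul_one, ← Real.exp_add, add_comm]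
        congr 2 <;> field_simp <;> ring
      rw [this, Real.log_mul (Real.exp_pos _).ne' hp.ne', Real.log_exp]
      field_simp
      ring
    rintro ⟨x, y⟩ ⟨x', y'⟩ ⟨hx, hy⟩ ⟨hx', hy'⟩
    rw [profile_eq_iff hf hh hx hy hx' hy', hk (x - y), hk (x' - y'), hl, hl]
    constructor <;> intro h <;> linarith

end Profile

theorem liquidityAdditive_of_separable {f : ℝ × ℝ → ℝ} {U V : ℝ → ℝ}
    (hE : EquivMM2 f fun I => U I.1 + V I.2) : LiquidityAdditive f := by
  rintro ⟨a, b⟩ ⟨ha, hb⟩ x y x' y' hx hy hx' hy' h1 h2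
  simp only at ha hb h1 h2 ⊢
  rw [hE _ _ ⟨by simp only; linarith, by simp only; linarith⟩
    ⟨by simp only; linarith, by simp only; linarith⟩] at h1 h2 ⊢
  simp only at h1 h2 ⊢
  linarith

theorem aversion_of_separable {f : ℝ × ℝ → ℝ} (hf : IsTradingFunction2 f) {U V : ℝ → ℝ}
    (hU : ConcaveOn ℝ univ U) (hV : ConcaveOn ℝ univ V) (mU : StrictMono U) (mV : StrictMono V)
    (hE : EquivMM2 f fun I => U I.1 + V I.2) : AversionPL2 f := by
  have cU : Continuous U := hU.locallyLipschitz.continuous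
  have cV : Continuous V := hV.locallyLipschitz.continuous
  -- the order of `f` agrees with that of `U + V`: move the smaller inventory up the diagonal until
  -- it is indifferent to the larger one
  have key : ∀ I J : ℝ × ℝ, Nonneg2 I → Nonneg2 J → U I.1 + V I.2 < U J.1 + V J.2 → f I < f J := by
    intro I J hI hJ hlt
    obtain ⟨s, hs, -, hsJ⟩ := exists_eq_of_continuous
      (φ := fun s => U (I.1 + s) + V (I.2 + s)) (c := U J.1 + V J.2) (by fun_prop)
      (show 0 ≤ J.1 + J.2 by linarith [hJ.1, hJ.2]) (by simpa using hlt.le)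
      (add_le_add (mU.monotone (by linarith [hI.1, hJ.2])) (mV.monotone (by linarith [hI.2, hJ.1])))
    have hs0 : 0 < s := lt_of_le_of_ne hs (by rintro rfl; simp at hsJ; linarith)
    rw [← (hE (I.1 + s, I.2 + s) J ⟨by simp only; linarith [hI.1], by simp only; linarith [hI.2]⟩
      hJ).2 hsJ]
    exact diag_lt hf hI hs0
  have hle : ∀ I J : ℝ × ℝ, Nonneg2 I → Nonneg2 J →
      (f I ≤ f J ↔ U I.1 + V I.2 ≤ U J.1 + V J.2) := fun I J hI hJ => by
    constructor
    · exact fun h => not_lt.1 fun hc => (key J I hJ hI hc).not_ge h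
    · intro h
      rcases h.eq_or_lt with h | h
      · exact ((hE I J hI hJ).2 h).le
      · exact (key I J hI hJ h).le
  intro J hJ I hI K hK a b ha hb hab
  have hn : Nonneg2 (a • I + b • K) :=
    ⟨add_nonneg (mul_nonneg ha hI.1.1) (mul_nonneg hb hK.1.1),
      add_nonneg (mul_nonneg ha hI.1.2) (mul_nonneg hb hK.1.2)⟩
  refine ⟨hn, (hle _ _ hJ hn).2 ?_⟩
  have h1 := mul_le_mul_of_nonneg_left ((hle _ _ hJ hI.1).1 hI.2) ha
  have h2 := mul_le_mul_of_nonneg_left ((hle _ _ hJ hK.1).1 hK.2) hb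
  have h3 := hU.2 (mem_univ I.1) (mem_univ K.1) ha hb hab
  have h4 := hV.2 (mem_univ I.2) (mem_univ K.2) ha hb hab
  simp only [smul_eq_mul, Prod.fst_add, Prod.snd_add, Prod.smul_fst, Prod.smul_snd] at h3 h4 ⊢
  have h5 : a * (U J.1 + V J.2) + b * (U J.1 + V J.2) = U J.1 + V J.2 := by
    rw [← add_mul, hab, one_mul]
  linarith

theorem concaveOn_neg_exp (c b : ℝ) :
    ConcaveOn ℝ univ fun x => -Real.exp ((c - x) / b) := by
  refine ConvexOn.neg ⟨convex_univ, fun x _ y _ r s hr hs hrs => ?_⟩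
  have := convexOn_exp.2 (mem_univ ((c - x) / b)) (mem_univ ((c - y) / b)) hr hs hrs
  have h1 : (c - (r * x + s * y)) / b = r * ((c - x) / b) + s * ((c - y) / b) := by
    linear_combination -(c / b) * hrs
  simp only [smul_eq_mul] at this ⊢
  rwa [h1]

theorem strictMono_neg_exp (c : ℝ) {b : ℝ} (hb : 0 < b) :
    StrictMono fun x => -Real.exp ((c - x) / b) := by
  intro x y hxy
  have : (c - y) / b < (c - x) / b := div_lt_div_of_pos_right (by linarith) hb
  have := Real.exp_lt_exp.2 this
  simp only; linarith

/-- The strictly monotone function `t ↦ -b * log t` can be stripped off the LMSR, leaving a separable one. -/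
theorem lmsr_equiv {f : ℝ × ℝ → ℝ} {b cA cB : ℝ} (hb : 0 < b)
    (hE : EquivMM2 f (LMSR2 b cA cB)) :
    EquivMM2 f fun I => -Real.exp ((cA - I.1) / b) + -Real.exp ((cB - I.2) / b) := by
  intro I J hI hJ
  rw [hE I J hI hJ]
  simp only [LMSR2]
  rw [mul_right_inj' (neg_ne_zero.2 hb.ne'),
    Real.log_injOn_pos.eq_iff (mem_Ioi.2 (by positivity)) (mem_Ioi.2 (by positivity))]
  constructor <;> intro h <;> linarith

/-- Corollary 7: Liquidity Additivity, translation invariance and aversion to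
permanent loss characterize two-asset LMSRs with `b > 0` and constant sum
market makers. -/
theorem stmt16 (f : ℝ × ℝ → ℝ) (hf : IsTradingFunction2 f) :
    (LiquidityAdditive f ∧ TranslationInvariant2 f ∧ AversionPL2 f) ↔
      ((∃ b cA cB : ℝ, 0 < b ∧ EquivMM2 f (LMSR2 b cA cB)) ∨
        (∃ cA cB : ℝ, 0 < cA ∧ 0 < cB ∧ EquivMM2 f (ConstSum2 cA cB))) := by
  constructor
  · rintro ⟨hLA, hTI, hPL⟩
    exact forward hf hLA hTI hPL
  · rintro (⟨b, cA, cB, hb, hE⟩ | ⟨cA, cB, hA, hB, hE⟩)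
    · have hE' := lmsr_equiv hb hE
      refine ⟨liquidityAdditive_of_separable (U := fun x => -Real.exp ((cA - x) / b))
        (V := fun x => -Real.exp ((cB - x) / b)) hE', ?_,
        aversion_of_separable hf (concaveOn_neg_exp cA b) (concaveOn_neg_exp cB b)
          (strictMono_neg_exp cA hb) (strictMono_neg_exp cB hb) hE'⟩
      intro I J t hI hJ hIt hJt h
      rw [hE' _ _ hI hJ] at h
      rw [hE' _ _ hIt hJt]
      have hs : ∀ c x : ℝ, Real.exp ((c - (x + t)) / b) =
          Real.exp ((c - x) / b) * Real.exp (-t / b) := fun c x => by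
        rw [← Real.exp_add]; congr 1; ring
      simp only [hs] at h ⊢
      linear_combination Real.exp (-t / b) * h
    · have hE' : EquivMM2 f fun I => cA * I.1 + cB * I.2 := hE
      have hc : ∀ c : ℝ, ConcaveOn ℝ univ fun x => c * x := fun c =>
        ⟨convex_univ, fun x _ y _ a b _ _ _ => le_of_eq (by simp only [smul_eq_mul]; ring)⟩
      refine ⟨liquidityAdditive_of_separable (U := fun x => cA * x) (V := fun x => cB * x) hE', ?_,
        aversion_of_separable hf (hc cA) (hc cB) (fun x y h => mul_lt_mul_of_pos_left h hA)
          (fun x y h => mul_lt_mul_of_pos_left h hB) hE'⟩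
      intro I J t hI hJ hIt hJt h
      rw [hE' _ _ hI hJ] at h
      rw [hE' _ _ hIt hJt]
      simp only at h ⊢
      linarith
end

section
/- Let φ : ℝ → ℝ be a strictly increasing function. Suppose there exist functions α, β : (0,∞) → ℝ with 0 < α(t) < t and 0 < β(t) < t for every t > 0, such that for every s ∈ ℝ and every t > 0: φ(s + α(t)) − φ(s) = φ(s + t) − φ(s + β(t)). Then there exist real constants c, d and γ such that either γ ≠ 0 and φ(s) = c·e^{γs} + d for all s ∈ ℝ, or γ = 0 and φ(s) = c·s + d for all s ∈ ℝ. -/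
/-!
Write `A f s = h⁻¹ ∫₀ʰ f (s + u) du`. The equation is linear and translation invariant in `s`, so the
triple average `F = A (A (A φ))` solves it with the same `α` and `β`, and `F` is twice differentiable
with `F' > 0`.

For such an `F`, order the shifts so that `α ≤ β` (the equation is symmetric in them) and read the
equation as an equality of two increments, over `[s, s + α t]` and `[s + β t, s + t]`. Dividing by the
lengths and letting `t → 0⁺`, the difference of the mean slopes divided by the distance
`m = (t + β - α) / 2` of the midpoints tends to `F'' s`. Hence
`(α / (t - β) - 1) / m → F'' s / F' s` (`tendsto_ratio`); the condition `α ≤ β` gives `m ≥ t / 2`,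
which controls the error. The left side involves neither `F` nor `s`, so `F'' = γ F'` with one and
the same `γ` for every `s` and every width `h`. Solving this, `F` is affine in
`E γ s = ∫₀ˢ exp (γ u) du` (`expPrim`).

As `h → 0⁺`, `F (s + h)`, which lies between `φ (s + h)` and `φ (s + 4 h)`, tends to the right limit
of `φ` at `s`. So the right limit function is affine in `E γ`, hence continuous, and a monotone
function whose right limit function is continuous agrees with it.
-/

open Filter Topology Set

/-- The forward average `h⁻¹ ∫₀ʰ f (s + u) du` of `f` at `s`. -/
noncomputable def fwdAvg (h : ℝ) (f : ℝ → ℝ) (s : ℝ) : ℝ :=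
  h⁻¹ * ∫ u in (0 : ℝ)..h, f (s + u)

/-- The primitive of `s ↦ exp (γ s)` vanishing at `0`, in closed form; the case `γ = 0` is the
identity. -/
noncomputable def expPrim (γ s : ℝ) : ℝ :=
  if γ = 0 then s else (Real.exp (γ * s) - 1) / γ

/-- The symmetric form of the functional equation. -/
def IsSol (α β f : ℝ → ℝ) : Prop :=
  ∀ s t : ℝ, 0 < t → f (s + α t) + f (s + β t) = f s + f (s + t)

lemma hasDerivAt_expPrim (γ s : ℝ) : HasDerivAt (expPrim γ) (Real.exp (γ * s)) s := by
  by_cases hγ : γ = 0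
  · have : expPrim γ = id := by funext x; simp [expPrim, hγ]
    rw [this]; simpa [hγ] using hasDerivAt_id s
  · have : expPrim γ = fun x => (Real.exp (γ * x) - 1) / γ := by
      funext x; simp [expPrim, hγ]
    rw [this]
    have h := ((((hasDerivAt_id s).const_mul γ).exp).sub_const 1).div_const γ
    refine h.congr_deriv ?_
    simp only [id]
    field_simp

lemma continuous_expPrim (γ : ℝ) : Continuous (expPrim γ) :=
  continuous_iff_continuousAt.2 fun s => (hasDerivAt_expPrim γ s).continuousAt

lemma expPrim_zero (γ : ℝ) : expPrim γ 0 = 0 := by simp [expPrim]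

lemma expPrim_one_ne (γ : ℝ) : expPrim γ 1 ≠ 0 := by
  by_cases hγ : γ = 0
  · simp [expPrim, hγ]
  · simp [expPrim, hγ, sub_eq_zero]

lemma intInt {f : ℝ → ℝ} (hf : Monotone f) (s a b : ℝ) :
    IntervalIntegrable (fun u => f (s + u)) MeasureTheory.volume a b :=
  Monotone.intervalIntegrable fun _ _ hxy => hf (by linarith)

lemma fwdAvg_eq (h : ℝ) {f : ℝ → ℝ} (hf : Monotone f) (s : ℝ) :
    fwdAvg h f s = h⁻¹ * ((∫ u in (0 : ℝ)..(s + h), f u) - ∫ u in (0 : ℝ)..s, f u) := by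
  rw [fwdAvg, intervalIntegral.integral_comp_add_left (fun u => f u) s, add_zero,
    intervalIntegral.integral_interval_sub_left hf.intervalIntegrable hf.intervalIntegrable]

lemma fwdAvg_mono {h : ℝ} (hh : 0 < h) {f : ℝ → ℝ} (hf : Monotone f) :
    Monotone (fwdAvg h f) := by
  intro x y hxy
  unfold fwdAvg
  have := intervalIntegral.integral_mono_on hh.le (intInt hf x 0 h) (intInt hf y 0 h)
    (fun u _ => hf (by linarith : x + u ≤ y + u))
  have hi := inv_pos.2 hh
  gcongr

lemma le_fwdAvg {h : ℝ} (hh : 0 < h) {f : ℝ → ℝ} (hf : Monotone f) (s : ℝ) :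
    f s ≤ fwdAvg h f s := by
  have := intervalIntegral.integral_mono_on hh.le
    (intervalIntegrable_const (c := f s)) (intInt hf s 0 h)
    (fun u hu => hf (by linarith [hu.1] : s ≤ s + u))
  rw [intervalIntegral.integral_const, smul_eq_mul, sub_zero] at this
  rw [fwdAvg, le_inv_mul_iff₀ hh]
  exact this

lemma fwdAvg_le {h : ℝ} (hh : 0 < h) {f : ℝ → ℝ} (hf : Monotone f) (s : ℝ) :
    fwdAvg h f s ≤ f (s + h) := by
  have := intervalIntegral.integral_mono_on hh.le (intInt hf s 0 h)
    (intervalIntegrable_const (c := f (s + h)))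
    (fun u hu => hf (by linarith [hu.2] : s + u ≤ s + h))
  rw [intervalIntegral.integral_const, smul_eq_mul, sub_zero] at this
  rw [fwdAvg, inv_mul_le_iff₀ hh]
  exact this

lemma fwdAvg_continuous (h : ℝ) {f : ℝ → ℝ} (hf : Monotone f) :
    Continuous (fwdAvg h f) := by
  have hc : Continuous fun s => ∫ u in (0 : ℝ)..s, f u :=
    intervalIntegral.continuous_primitive (fun _ _ => hf.intervalIntegrable) 0
  rw [funext (fwdAvg_eq h hf)]
  exact continuous_const.mul ((hc.comp (by fun_prop : Continuous fun s : ℝ => s + h)).sub hc)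

lemma fwdAvg_hasDerivAt (h : ℝ) {f : ℝ → ℝ} (hf : Monotone f) (hc : Continuous f) (s : ℝ) :
    HasDerivAt (fwdAvg h f) (h⁻¹ * (f (s + h) - f s)) s := by
  have hd : ∀ x, HasDerivAt (fun y => ∫ u in (0 : ℝ)..y, f u) (f x) x := fun x =>
    hc.integral_hasStrictDerivAt 0 x |>.hasDerivAt
  rw [funext (fwdAvg_eq h hf)]
  exact (((hd (s + h)).comp_add_const s h).sub (hd s)).const_mul h⁻¹

lemma fwdAvg_strictMono {h : ℝ} (hh : 0 < h) {f : ℝ → ℝ} (hf : StrictMono f) :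
    StrictMono (fwdAvg h f) := by
  intro x y hxy
  unfold fwdAvg
  have hi := inv_pos.2 hh
  have : ∫ u in (0 : ℝ)..h, f (x + u) < ∫ u in (0 : ℝ)..h, f (y + u) := by
    rw [← sub_pos, ← intervalIntegral.integral_sub (intInt hf.monotone y 0 h)
      (intInt hf.monotone x 0 h)]
    exact intervalIntegral.intervalIntegral_pos_of_pos
      ((intInt hf.monotone y 0 h).sub (intInt hf.monotone x 0 h))
      (fun u => sub_pos.2 (hf (by linarith))) hh
  gcongr

lemma fwdAvg_isSol (h : ℝ) {α β f : ℝ → ℝ} (hf : Monotone f) (hs : IsSol α β f) :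
    IsSol α β (fwdAvg h f) := by
  intro s t ht
  unfold fwdAvg
  rw [← mul_add, ← mul_add, ← intervalIntegral.integral_add (intInt hf _ _ _) (intInt hf _ _ _),
    ← intervalIntegral.integral_add (intInt hf _ _ _) (intInt hf _ _ _)]
  congr 2
  funext u
  have := hs (s + u) t ht
  rw [show s + α t + u = s + u + α t by ring, show s + β t + u = s + u + β t by ring,
    show s + t + u = s + u + t by ring]
  exact this

/-- Second-order expansion of increments, with an error proportional to the length `b - a` of the
increment even when that length is much smaller than `t`. -/
lemma increment_expansion {f f' : ℝ → ℝ} {s q : ℝ} (h1 : ∀ x, HasDerivAt f (f' x) x)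
    (h2 : HasDerivAt f' q s) {ε : ℝ} (hε : 0 < ε) :
    ∀ᶠ t in 𝓝[>] (0 : ℝ), ∀ a b : ℝ, 0 ≤ a → a < b → b ≤ t →
      |(f (s + b) - f (s + a)) / (b - a) - (f' s + q * ((a + b) / 2))| ≤ ε * t := by
  have hl := (hasDerivAt_iff_isLittleO_nhds_zero.1 h2).def hε
  obtain ⟨δ, hδ, hb⟩ := Metric.eventually_nhds_iff.1 hl
  filter_upwards [Ioo_mem_nhdsGT hδ] with t ht a b ha hab hbt
  let G : ℝ → ℝ := fun x => f (s + x) - (f' s * x + q * (x ^ 2 / 2))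
  have hG : ∀ x, HasDerivAt G (f' (s + x) - (f' s + q * x)) x := by
    intro x
    have e1 := (h1 (s + x)).comp_const_add s x
    have e2 := ((hasDerivAt_id x).const_mul (f' s)).add
      ((((hasDerivAt_id x).pow 2).div_const 2).const_mul q)
    refine (e1.sub e2).congr_deriv ?_
    simp
  have key := (convex_Icc (0 : ℝ) t).norm_image_sub_le_of_norm_hasDerivWithin_le
    (C := ε * t) (f := G) (x := a) (y := b) (fun x _ => (hG x).hasDerivWithinAt) (fun x hx => by
      have := hb (y := x) (by rw [Real.dist_eq, sub_zero, abs_of_nonneg hx.1]; linarith [hx.2, ht.2])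
      rw [Real.norm_eq_abs, Real.norm_eq_abs, abs_of_nonneg hx.1, smul_eq_mul] at this
      rw [Real.norm_eq_abs]
      calc _ = |f' (s + x) - f' s - x * q| := by congr 1; ring
        _ ≤ ε * x := this
        _ ≤ ε * t := by gcongr; exact hx.2) ⟨ha, by linarith⟩ ⟨by linarith, hbt⟩
  have hba : 0 < b - a := by linarith
  rw [Real.norm_eq_abs, Real.norm_eq_abs, abs_of_pos hba] at key
  have : (f (s + b) - f (s + a)) / (b - a) - (f' s + q * ((a + b) / 2)) = (G b - G a) / (b - a) := by
    simp only [G]; field_simp; ring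
  rw [this, abs_div, abs_of_pos hba, div_le_iff₀ hba]
  exact key

/-- The limit of a quantity built from `α` and `β` alone determines `F'' s / F' s` for every
regular solution `F` and every `s`. -/
lemma tendsto_ratio {α β f f' : ℝ → ℝ} {s q : ℝ}
    (hα : ∀ t : ℝ, 0 < t → 0 < α t) (hαβ : ∀ t : ℝ, 0 < t → α t ≤ β t)
    (hβ : ∀ t : ℝ, 0 < t → β t < t) (hs : IsSol α β f)
    (h1 : ∀ x, HasDerivAt f (f' x) x) (hp : 0 < f' s) (h2 : HasDerivAt f' q s) :
    Tendsto (fun t => (α t / (t - β t) - 1) / ((t + β t - α t) / 2)) (𝓝[>] 0)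
      (𝓝 (q / f' s)) := by
  have hpos : ∀ᶠ t in 𝓝[>] (0 : ℝ), 0 < t := self_mem_nhdsWithin
  -- `η₁`, `η₂` are the errors of the mean slopes over `[s, s + α t]` and `[s + β t, s + t]`.
  let η₁ : ℝ → ℝ := fun t => (f (s + α t) - f (s + 0)) / (α t - 0) - (f' s + q * ((0 + α t) / 2))
  let η₂ : ℝ → ℝ := fun t => (f (s + t) - f (s + β t)) / (t - β t) - (f' s + q * ((β t + t) / 2))
  have ht0 : Tendsto (fun t : ℝ => t) (𝓝[>] 0) (𝓝 0) := tendsto_id.mono_left nhdsWithin_le_nhds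
  have hα0 : Tendsto α (𝓝[>] 0) (𝓝 0) := by
    refine squeeze_zero' ?_ ?_ ht0
    · filter_upwards [hpos] with t ht using (hα t ht).le
    · filter_upwards [hpos] with t ht using ((hαβ t ht).trans (hβ t ht).le)
  have hη₁ : η₁ =o[𝓝[>] 0] fun t => t := by
    refine Asymptotics.IsLittleO.of_bound fun ε hε => ?_
    filter_upwards [increment_expansion h1 h2 hε, hpos] with t h ht
    rw [Real.norm_eq_abs, Real.norm_eq_abs, abs_of_pos ht]
    exact h 0 (α t) le_rfl (hα t ht) ((hαβ t ht).trans (hβ t ht).le)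
  have hη₂ : η₂ =o[𝓝[>] 0] fun t => t := by
    refine Asymptotics.IsLittleO.of_bound fun ε hε => ?_
    filter_upwards [increment_expansion h1 h2 hε, hpos] with t h ht
    rw [Real.norm_eq_abs, Real.norm_eq_abs, abs_of_pos ht]
    exact h (β t) t ((hα t ht).le.trans (hαβ t ht)) (hβ t ht) le_rfl
  have hm : (fun t : ℝ => t) =O[𝓝[>] 0] fun t => (t + β t - α t) / 2 := by
    refine Asymptotics.IsBigO.of_bound 2 ?_
    filter_upwards [hpos] with t ht
    have := hαβ t ht
    rw [Real.norm_eq_abs, Real.norm_eq_abs, abs_of_pos ht, abs_of_pos (by linarith)]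
    linarith
  have hquot : Tendsto (fun t => (η₂ t - η₁ t) / ((t + β t - α t) / 2)) (𝓝[>] 0) (𝓝 0) :=
    ((hη₂.sub hη₁).trans_isBigO hm).tendsto_div_nhds_zero
  have hη₁0 : Tendsto η₁ (𝓝[>] 0) (𝓝 0) := hη₁.trans_tendsto ht0
  have hden : Tendsto (fun t => f' s + q * (α t / 2) + η₁ t) (𝓝[>] 0) (𝓝 (f' s)) := by
    simpa using (((hα0.div_const 2).const_mul q).const_add (f' s)).add hη₁0
  have hnum : Tendsto (fun t => q + (η₂ t - η₁ t) / ((t + β t - α t) / 2)) (𝓝[>] 0) (𝓝 q) := by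
    simpa using hquot.const_add q
  refine (hnum.div hden hp.ne').congr' ?_
  filter_upwards [hpos, hden.eventually (lt_mem_nhds hp)] with t ht hd
  have hm0 : 0 < (t + β t - α t) / 2 := by linarith [hαβ t ht]
  have ha := hα t ht
  have hw : 0 < t - β t := by linarith [hβ t ht]
  have e1 : f (s + α t) - f s = α t * (f' s + q * (α t / 2) + η₁ t) := by
    simp only [η₁, add_zero, sub_zero, zero_add]; field_simp; ring
  have e2 : f (s + t) - f (s + β t) = (t - β t) * (f' s + q * ((β t + t) / 2) + η₂ t) := by
    simp only [η₂]; field_simp; ring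
  have e3 : α t * (f' s + q * (α t / 2) + η₁ t)
      = (t - β t) * (f' s + q * ((β t + t) / 2) + η₂ t) := by
    rw [← e1, ← e2]; linarith [hs s t ht]
  have e4 : α t / (t - β t) = (f' s + q * ((β t + t) / 2) + η₂ t) /
      (f' s + q * (α t / 2) + η₁ t) := by
    rw [div_eq_div_iff hw.ne' hd.ne', e3]; ring
  simp only [Pi.div_apply]
  rw [e4, eq_div_iff hm0.ne', div_sub_one hd.ne', div_mul_eq_mul_div]
  congr 1
  rw [add_mul, div_mul_cancel₀ _ hm0.ne']
  ring

lemma solve_ode {f f' : ℝ → ℝ} {γ : ℝ} (h1 : ∀ x, HasDerivAt f (f' x) x)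
    (h2 : ∀ x, HasDerivAt f' (γ * f' x) x) (s : ℝ) :
    f s = f 0 + f' 0 * expPrim γ s := by
  have hexp : ∀ x, f' x = f' 0 * Real.exp (γ * x) := by
    intro x
    have hd : ∀ y, HasDerivAt (fun z => f' z * Real.exp (-(γ * z))) 0 y := by
      intro y
      have h := (h2 y).mul ((((hasDerivAt_id y).const_mul γ).neg).exp)
      refine h.congr_deriv ?_
      simp only [Pi.neg_apply, id]
      ring
    have hc := is_const_of_deriv_eq_zero (fun y => (hd y).differentiableAt)
      (fun y => (hd y).deriv) x 0
    simp only [mul_zero, neg_zero, Real.exp_zero, mul_one] at hc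
    rw [← hc, mul_assoc, ← Real.exp_add]; simp
  have hd : ∀ y, HasDerivAt (fun z => f z - f' 0 * expPrim γ z) 0 y := by
    intro y
    have h := (h1 y).sub ((hasDerivAt_expPrim γ y).const_mul (f' 0))
    rwa [← hexp, sub_self] at h
  have hc := is_const_of_deriv_eq_zero (fun y => (hd y).differentiableAt)
    (fun y => (hd y).deriv) s 0
  simp only [expPrim_zero] at hc
  linarith

/-- If, for every `h > 0`, the triple average of width `h` is affine in `expPrim γ`, then so is `φ`:
its right limits inherit the identity as `h → 0⁺`, and their continuity identifies them with `φ`. -/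
lemma affine_of_avg_affine {φ : ℝ → ℝ} (hφ : Monotone φ) {γ : ℝ}
    (H : ∀ h : ℝ, 0 < h → ∃ K C : ℝ, ∀ s,
      fwdAvg h (fwdAvg h (fwdAvg h φ)) s = K + C * expPrim γ s) :
    ∃ K C : ℝ, ∀ s, φ s = K + C * expPrim γ s := by
  let F : ℝ → ℝ → ℝ := fun h => fwdAvg h (fwdAvg h (fwdAvg h φ))
  let R : ℝ → ℝ := Function.rightLim φ
  have hpos : ∀ᶠ t in 𝓝[>] (0 : ℝ), 0 < t := self_mem_nhdsWithin
  have hshift : ∀ s k : ℝ, 0 < k → Tendsto (fun h => φ (s + k * h)) (𝓝[>] 0) (𝓝 (R s)) := by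
    intro s k hk
    refine (hφ.tendsto_rightLim s).comp (tendsto_nhdsWithin_iff.2 ⟨?_, ?_⟩)
    · have : Tendsto (fun h : ℝ => s + k * h) (𝓝 0) (𝓝 (s + k * 0)) :=
        (by fun_prop : Continuous fun h : ℝ => s + k * h).tendsto 0
      simpa using this.mono_left nhdsWithin_le_nhds
    · filter_upwards [hpos] with h hh
      have := mul_pos hk hh
      simp only [mem_Ioi]; linarith
  have hF : ∀ s, Tendsto (fun h => F h (s + h)) (𝓝[>] 0) (𝓝 (R s)) := by
    intro s
    refine tendsto_of_tendsto_of_tendsto_of_le_of_le' (hshift s 1 one_pos)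
      (hshift s 4 (by norm_num)) ?_ ?_
    · filter_upwards [hpos] with h hh
      have m1 := fwdAvg_mono hh hφ
      have m2 := fwdAvg_mono hh m1
      rw [one_mul]
      exact ((le_fwdAvg hh hφ _).trans (le_fwdAvg hh m1 _)).trans (le_fwdAvg hh m2 _)
    · filter_upwards [hpos] with h hh
      have m1 := fwdAvg_mono hh hφ
      have m2 := fwdAvg_mono hh m1
      have := ((fwdAvg_le hh m2 (s + h)).trans (fwdAvg_le hh m1 _)).trans (fwdAvg_le hh hφ _)
      rwa [show s + h + h + h + h = s + 4 * h by ring] at this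
  have hE : ∀ s, Tendsto (fun h => expPrim γ (s + h)) (𝓝[>] 0) (𝓝 (expPrim γ s)) := by
    intro s
    have : Tendsto (fun h => expPrim γ (s + h)) (𝓝 0) (𝓝 (expPrim γ (s + 0))) :=
      ((continuous_expPrim γ).comp (by fun_prop : Continuous fun h : ℝ => s + h)).tendsto 0
    rw [add_zero] at this
    exact this.mono_left nhdsWithin_le_nhds
  -- Eliminating the two coefficients gives an identity that passes to the limit.
  have hR : ∀ s, (R s - R 0) * (expPrim γ 1 - expPrim γ 0)
      = (R 1 - R 0) * (expPrim γ s - expPrim γ 0) := by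
    intro s
    refine tendsto_nhds_unique (((hF s).sub (hF 0)).mul ((hE 1).sub (hE 0)))
      ((((hF 1).sub (hF 0)).mul ((hE s).sub (hE 0))).congr' ?_)
    filter_upwards [hpos] with h hh
    obtain ⟨K, C, hKC⟩ := H h hh
    simp only [F, hKC]
    ring
  have hR' : ∀ s, R s = R 0 + (R 1 - R 0) / expPrim γ 1 * expPrim γ s := by
    intro s
    have h := hR s
    rw [expPrim_zero, sub_zero, sub_zero] at h
    have h1 := expPrim_one_ne γ
    field_simp
    linarith
  have hRc : Continuous R := by
    rw [funext hR']
    exact continuous_const.add (continuous_const.mul (continuous_expPrim γ))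
  refine ⟨R 0, (R 1 - R 0) / expPrim γ 1, fun s => ?_⟩
  rw [← hR' s]
  refine le_antisymm (hφ.le_rightLim le_rfl) ?_
  refine le_of_tendsto ((hRc.tendsto s).mono_left (nhdsWithin_le_nhds (s := Iio s))) ?_
  filter_upwards [self_mem_nhdsWithin] with x hx
  exact hφ.rightLim_le hx

/-- Key functional-equation lemma: a strictly increasing real function `φ`
satisfying `φ(s + α(t)) − φ(s) = φ(s + t) − φ(s + β(t))` for all `s` and all
`t > 0`, where `0 < α(t) < t` and `0 < β(t) < t`, is (up to an additive
constant) an exponential function or a linear function. -/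
theorem stmt18 (φ : ℝ → ℝ) (hφ : StrictMono φ) (α β : ℝ → ℝ)
    (hα : ∀ t : ℝ, 0 < t → 0 < α t ∧ α t < t)
    (hβ : ∀ t : ℝ, 0 < t → 0 < β t ∧ β t < t)
    (heq : ∀ (s t : ℝ), 0 < t →
      φ (s + α t) - φ s = φ (s + t) - φ (s + β t)) :
    ∃ c d γ : ℝ,
      (γ ≠ 0 ∧ ∀ s : ℝ, φ s = c * Real.exp (γ * s) + d) ∨
      (γ = 0 ∧ ∀ s : ℝ, φ s = c * s + d) := by
  let a : ℝ → ℝ := fun t => min (α t) (β t)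
  let b : ℝ → ℝ := fun t => max (α t) (β t)
  have hsol : IsSol a b φ := by
    intro s t ht
    have := heq s t ht
    rcases le_total (α t) (β t) with h | h
    · simp only [a, b, min_eq_left h, max_eq_right h]; linarith
    · simp only [a, b, min_eq_right h, max_eq_left h]; linarith
  have ha : ∀ t : ℝ, 0 < t → 0 < a t := fun t ht => lt_min (hα t ht).1 (hβ t ht).1
  have hab : ∀ t : ℝ, 0 < t → a t ≤ b t := fun t _ => min_le_max
  have hb : ∀ t : ℝ, 0 < t → b t < t := fun t ht => max_lt (hα t ht).2 (hβ t ht).2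
  -- `F`, `F'`, `F''` are the triple average of width `h` and its first two derivatives.
  let F : ℝ → ℝ → ℝ := fun h => fwdAvg h (fwdAvg h (fwdAvg h φ))
  let F' : ℝ → ℝ → ℝ := fun h s =>
    h⁻¹ * (fwdAvg h (fwdAvg h φ) (s + h) - fwdAvg h (fwdAvg h φ) s)
  let F'' : ℝ → ℝ → ℝ := fun h s =>
    h⁻¹ * (h⁻¹ * (fwdAvg h φ (s + h + h) - fwdAvg h φ (s + h))
      - h⁻¹ * (fwdAvg h φ (s + h) - fwdAvg h φ s))
  have hF1 : ∀ h, 0 < h → ∀ s, HasDerivAt (F h) (F' h s) s := by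
    intro h hh s
    have m1 := fwdAvg_mono hh hφ.monotone
    have m2 := fwdAvg_mono hh m1
    exact fwdAvg_hasDerivAt h m2 (fwdAvg_continuous h m1) s
  have hF2 : ∀ h, 0 < h → ∀ s, HasDerivAt (F' h) (F'' h s) s := by
    intro h hh s
    have m1 := fwdAvg_mono hh hφ.monotone
    have d := fwdAvg_hasDerivAt h m1 (fwdAvg_continuous h hφ.monotone)
    exact (((d (s + h)).comp_add_const s h).sub (d s)).const_mul h⁻¹
  have hFpos : ∀ h, 0 < h → ∀ s, 0 < F' h s := by
    intro h hh s
    have m2 := fwdAvg_strictMono hh (fwdAvg_strictMono hh hφ)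
    exact mul_pos (inv_pos.2 hh) (sub_pos.2 (m2 (by linarith)))
  have hFsol : ∀ h, 0 < h → IsSol a b (F h) := by
    intro h hh
    have m1 := fwdAvg_mono hh hφ.monotone
    exact fwdAvg_isSol h (fwdAvg_mono hh m1)
      (fwdAvg_isSol h m1 (fwdAvg_isSol h hφ.monotone hsol))
  have hlim := fun h (hh : 0 < h) s =>
    tendsto_ratio ha hab hb (hFsol h hh) (hF1 h hh) (hFpos h hh s) (hF2 h hh s)
  -- Any fixed width and point serve to name the common value of `F'' / F'`.
  let γ : ℝ := F'' 1 0 / F' 1 0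
  have hγ : ∀ h, 0 < h → ∀ s, F'' h s = γ * F' h s := by
    intro h hh s
    have := tendsto_nhds_unique (hlim h hh s) (hlim 1 one_pos 0)
    exact (div_eq_iff (hFpos h hh s).ne').1 this
  obtain ⟨K, C, hKC⟩ := affine_of_avg_affine hφ.monotone (γ := γ) fun h hh =>
    ⟨F h 0, F' h 0, solve_ode (hF1 h hh) fun x => by rw [← hγ h hh x]; exact hF2 h hh x⟩
  by_cases h0 : γ = 0
  · refine ⟨C, K, γ, Or.inr ⟨h0, fun s => ?_⟩⟩
    rw [hKC s, expPrim, if_pos h0, add_comm]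
  · refine ⟨C / γ, K - C / γ, γ, Or.inl ⟨h0, fun s => ?_⟩⟩
    rw [hKC s, expPrim, if_neg h0]
    ring
end
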